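/- arXiv:1706.00392 — 4 statements merged into one kernel-verified Lean document; each statement's English description precedes it below -/
import Mathlib

section
/- Let ℓ = 4^n − 1 for some integer n ≥ 1. Then there exists a constant C > 0 such that for all sufficiently large x, #{p ≤ x : p prime, p > ℓ, φ(p−ℓ) = φ(p+ℓ)} ≤ C · x / (log x)^3. -/
section PhiHelpers
open Finset

lemma card_of_congr (A : Finset ℕ) (X D : ℕ) (hA : ∀ a ∈ A, a ≤ X)
    (h : ∀ a ∈ A, ∀ b ∈ A, (D:ℤ) ∣ 2 * ((a:ℤ) - b)) : (A.card:ℝ) ≤ 2 * X / D + 1 := by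
  have hinj : Set.InjOn (fun a => 2 * a / D) (A : Set ℕ) := by
    intro a ha b hb hab
    have h1 := h a ha b hb
    have h2 : (2 * a) % D = (2 * b) % D := by
      have : (2 * b) ≡ (2 * a) [MOD D] := by
        rw [Nat.modEq_iff_dvd]; push_cast; convert h1 using 1; ring
      exact this.symm
    have h3 := Nat.div_add_mod (2*a) D
    have h4 := Nat.div_add_mod (2*b) D
    simp only at hab
    rw [hab, h2] at h3
    omega
  have hc : A.card ≤ (Finset.range (2 * X / D + 1)).card := by
    apply Finset.card_le_card_of_injOn _ _ hinj
    intro a ha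
    have := hA a ha
    simp only [Finset.coe_range, Set.mem_Iio]
    exact Nat.lt_succ_of_le (Nat.div_le_div_right (by omega))
  rw [Finset.card_range] at hc
  have : ((2 * X / D : ℕ) : ℝ) ≤ ((2 * X : ℕ):ℝ) / D := Nat.cast_div_le
  push_cast at this
  have hc' : (A.card : ℝ) ≤ ((2 * X / D : ℕ) : ℝ) + 1 := by exact_mod_cast hc
  linarith

lemma harm_le (Y : ℕ) : ∑ a ∈ Finset.Icc 1 Y, (1:ℝ) / a ≤ 1 + Real.log Y := by
  have := harmonic_le_one_add_log Y
  rw [harmonic_eq_sum_Icc] at this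
  push_cast at this
  simpa [one_div] using this

lemma sq_tail (Q Y : ℕ) (hQ : 1 ≤ Q) : ∑ q ∈ Finset.Ioc Q Y, (1:ℝ) / (q:ℝ)^2 ≤ 1 / Q := by
  rcases le_total Q Y with h | h
  · have := sum_Ioc_inv_sq_le_sub (α := ℝ) (k := Q) (n := Y) (by omega) h
    have h2 : (0:ℝ) ≤ (Y:ℝ)⁻¹ := by positivity
    simp only [one_div]
    linarith
  · rw [Finset.Ioc_eq_empty (by omega)]; simp

open Classical in
lemma case1 (X Q ℓ : ℕ) (T : ℝ) (hQ : 1 ≤ Q) (hT : 1 ≤ T) (hX : ℓ ≤ X) :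
    (((Finset.Icc 1 X).filter (fun p => ℓ < p ∧ ∃ q a b, Q < q ∧ 1 ≤ a ∧ 1 ≤ b ∧
      (1 + q * a) ∣ p - ℓ ∧ (1 + q * b) ∣ p + ℓ ∧ Nat.Coprime (1 + q * a) (1 + q * b) ∧
      (((1 + q * a) * (1 + q * b) : ℕ) : ℝ) ≤ X * T)).card : ℝ) ≤
      3 * X * T / Q * (1 + Real.log (2 * X : ℕ)) ^ 2 := by
  set S := (Finset.Icc 1 X).filter (fun p => ℓ < p ∧ ∃ q a b, Q < q ∧ 1 ≤ a ∧ 1 ≤ b ∧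
      (1 + q * a) ∣ p - ℓ ∧ (1 + q * b) ∣ p + ℓ ∧ Nat.Coprime (1 + q * a) (1 + q * b) ∧
      (((1 + q * a) * (1 + q * b) : ℕ) : ℝ) ≤ X * T) with hS
  let A : ℕ → ℕ → ℕ → Finset ℕ := fun q a b => (Finset.Icc 1 X).filter (fun p => ℓ < p ∧
      (1 + q * a) ∣ p - ℓ ∧ (1 + q * b) ∣ p + ℓ ∧ Nat.Coprime (1 + q * a) (1 + q * b) ∧
      (((1 + q * a) * (1 + q * b) : ℕ) : ℝ) ≤ X * T)
  have hsub : S ⊆ (Finset.Ioc Q (2*X)).biUnion (fun q => (Finset.Icc 1 (2*X)).biUnion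
      (fun a => (Finset.Icc 1 (2*X)).biUnion (fun b => A q a b))) := by
    intro p hp
    simp only [hS, Finset.mem_filter, Finset.mem_Icc] at hp
    obtain ⟨⟨hp1, hp2⟩, hl, q, a, b, hq, ha, hb, h1, h2, h3, h4⟩ := hp
    have l1 := Nat.le_of_dvd (by omega) h1
    have l2 := Nat.le_of_dvd (by omega) h2
    have l3 : q ≤ q * a := Nat.le_mul_of_pos_right _ (by omega)
    have l4 : a ≤ q * a := Nat.le_mul_of_pos_left _ (by omega)
    have l5 : b ≤ q * b := Nat.le_mul_of_pos_left _ (by omega)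
    simp only [Finset.mem_biUnion, Finset.mem_Ioc, Finset.mem_Icc, A, Finset.mem_filter]
    exact ⟨q, ⟨hq, by omega⟩, a, ⟨ha, by omega⟩, b, ⟨hb, by omega⟩, ⟨hp1, hp2⟩, hl, h1, h2, h3, h4⟩
  have hA : ∀ q ∈ Finset.Ioc Q (2*X), ∀ a ∈ Finset.Icc 1 (2*X), ∀ b ∈ Finset.Icc 1 (2*X),
      ((A q a b).card : ℝ) ≤ 3 * X * T * (1 / (q:ℝ)^2 * ((1 / a) * (1 / b))) := by
    intro q hq a ha b hb
    simp only [Finset.mem_Ioc, Finset.mem_Icc] at hq ha hb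
    rcases (A q a b).eq_empty_or_nonempty with he | ⟨p0, hp0⟩
    · rw [he]; simp; positivity
    simp only [A, Finset.mem_filter, Finset.mem_Icc] at hp0
    obtain ⟨_, hl, h1, h2, h3, h4⟩ := hp0
    have := card_of_congr (A q a b) X ((1 + q * a) * (1 + q * b))
      (by intro p hp; simp only [A, Finset.mem_filter, Finset.mem_Icc] at hp; exact hp.1.2)
      (by
        intro p hp p' hp'
        simp only [A, Finset.mem_filter, Finset.mem_Icc] at hp hp'
        apply Dvd.dvd.mul_left
        push_cast
        apply IsCoprime.mul_dvd
        · exact_mod_cast Nat.isCoprime_iff_coprime.mpr h3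
        · obtain ⟨c, hc⟩ := hp.2.2.1
          obtain ⟨c', hc'⟩ := hp'.2.2.1
          refine ⟨(c:ℤ) - c', ?_⟩
          have e1 : (p:ℤ) = ℓ + (1 + q * a) * c := by
            have : p = ℓ + (1 + q * a) * c := by omega
            exact_mod_cast this
          have e2 : (p':ℤ) = ℓ + (1 + q * a) * c' := by
            have : p' = ℓ + (1 + q * a) * c' := by omega
            exact_mod_cast this
          rw [e1, e2]; ring
        · obtain ⟨c, hc⟩ := hp.2.2.2.1
          obtain ⟨c', hc'⟩ := hp'.2.2.2.1
          refine ⟨(c:ℤ) - c', ?_⟩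
          have e1 : (p:ℤ) + ℓ = (1 + q * b) * c := by exact_mod_cast hc
          have e2 : (p':ℤ) + ℓ = (1 + q * b) * c' := by exact_mod_cast hc'
          linear_combination e1 - e2)
    refine this.trans ?_
    set D : ℝ := (((1 + q * a) * (1 + q * b) : ℕ) : ℝ) with hD
    have hq0 : (0:ℝ) < q := by have : 0 < q := by omega
                               exact_mod_cast this
    have ha0 : (0:ℝ) < a := by have : 0 < a := by omega
                               exact_mod_cast this
    have hb0 : (0:ℝ) < b := by have : 0 < b := by omega
                               exact_mod_cast this
    have hDpos : 0 < D := by rw [hD]; positivity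
    have hDge : (q:ℝ)^2 * (a * b) ≤ D := by
      rw [hD]; push_cast
      nlinarith [mul_pos hq0 ha0, mul_pos hq0 hb0]
    have hX0 : (0:ℝ) ≤ X := by positivity
    calc 2 * X / D + 1 ≤ 2 * (X * T) / D + (X * T) / D := by
          gcongr
          · nlinarith
          · rw [le_div_iff₀ hDpos]; linarith
      _ = 3 * X * T * (1 / D) := by ring
      _ ≤ 3 * X * T * (1 / ((q:ℝ)^2 * (a * b))) := by gcongr
      _ = _ := by field_simp
  have h1 : (S.card : ℝ) ≤ ∑ q ∈ Finset.Ioc Q (2*X), ∑ a ∈ Finset.Icc 1 (2*X), ∑ b ∈ Finset.Icc 1 (2*X),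
      ((A q a b).card : ℝ) := by
    have := Finset.card_le_card hsub
    have h2 : S.card ≤ ∑ q ∈ Finset.Ioc Q (2*X), ∑ a ∈ Finset.Icc 1 (2*X), ∑ b ∈ Finset.Icc 1 (2*X),
      (A q a b).card := by
      refine this.trans (Finset.card_biUnion_le.trans ?_)
      refine Finset.sum_le_sum fun q _ => Finset.card_biUnion_le.trans ?_
      exact Finset.sum_le_sum fun a _ => Finset.card_biUnion_le
    exact_mod_cast h2
  refine h1.trans ?_
  calc _ ≤ ∑ q ∈ Finset.Ioc Q (2*X), ∑ a ∈ Finset.Icc 1 (2*X), ∑ b ∈ Finset.Icc 1 (2*X),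
        3 * X * T * (1 / (q:ℝ)^2 * ((1 / a) * (1 / b))) :=
        Finset.sum_le_sum fun q hq => Finset.sum_le_sum fun a ha => Finset.sum_le_sum fun b hb =>
          hA q hq a ha b hb
    _ = 3 * X * T * ((∑ q ∈ Finset.Ioc Q (2*X), 1 / (q:ℝ)^2) * (∑ a ∈ Finset.Icc 1 (2*X), (1:ℝ) / a) ^ 2) := by
        simp only [← Finset.mul_sum, ← Finset.sum_mul]
        ring
    _ ≤ 3 * X * T * ((1 / Q) * (1 + Real.log (2 * X : ℕ)) ^ 2) := by
        gcongr
        · exact sq_tail Q _ hQ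
        · exact harm_le _
    _ = _ := by ring

open Classical in
lemma sqcase (X Q ℓ : ℕ) (hQ : 1 ≤ Q) (hX : ℓ ≤ X) :
    (((Finset.Icc 1 X).filter (fun p => ℓ < p ∧ ∃ r, Q < r ∧
      (r ^ 2 ∣ p - ℓ ∨ r ^ 2 ∣ p + ℓ))).card : ℝ) ≤ 8 * X / Q := by
  set S := (Finset.Icc 1 X).filter (fun p => ℓ < p ∧ ∃ r, Q < r ∧
      (r ^ 2 ∣ p - ℓ ∨ r ^ 2 ∣ p + ℓ)) with hS
  let A : ℕ → Finset ℕ := fun r => (Finset.Icc 1 X).filter (fun p => ℓ < p ∧ r ^ 2 ∣ p - ℓ)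
  let B : ℕ → Finset ℕ := fun r => (Finset.Icc 1 X).filter (fun p => ℓ < p ∧ r ^ 2 ∣ p + ℓ)
  have hsub : S ⊆ (Finset.Ioc Q (2*X)).biUnion (fun r => A r ∪ B r) := by
    intro p hp
    simp only [hS, Finset.mem_filter, Finset.mem_Icc] at hp
    obtain ⟨⟨hp1, hp2⟩, hl, r, hr, h⟩ := hp
    have h5 : r ≤ r ^ 2 := Nat.le_self_pow (by norm_num) r
    have h6 : r ^ 2 ≤ 2 * X := by
      rcases h with h | h
      · have := Nat.le_of_dvd (by omega) h; omega
      · have := Nat.le_of_dvd (by omega) h; omega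
    simp only [Finset.mem_biUnion, Finset.mem_Ioc, Finset.mem_union, Finset.mem_Icc, A, B, Finset.mem_filter]
    refine ⟨r, ⟨hr, by omega⟩, ?_⟩
    tauto
  have key : ∀ (r : ℕ) (F : Finset ℕ), Q < r → (∀ p ∈ F, p ≤ X) → (∀ p ∈ F, r ^ 2 ≤ 2 * X) →
      (∀ a ∈ F, ∀ b ∈ F, ((r ^ 2 : ℕ):ℤ) ∣ ((a:ℤ) - b)) → (F.card : ℝ) ≤ 4 * X * (1 / (r:ℝ) ^ 2) := by
    intro r F hr h1 h2 h3
    rcases F.eq_empty_or_nonempty with he | ⟨p, hp⟩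
    · rw [he]; simp; positivity
    have := card_of_congr F X (r ^ 2) h1 (fun a ha b hb => Dvd.dvd.mul_left (h3 a ha b hb) _)
    have hr0 : (0:ℝ) < (r:ℝ) ^ 2 := by
      have : 0 < r := by omega
      positivity
    have h4 : (r:ℝ) ^ 2 ≤ 2 * X := by exact_mod_cast h2 p hp
    have h5 : (1:ℝ) ≤ 2 * X / (r:ℝ) ^ 2 := by rw [le_div_iff₀ hr0]; linarith
    push_cast at this
    calc _ ≤ _ := this
      _ ≤ 2 * X / (r:ℝ) ^ 2 + 2 * X / (r:ℝ) ^ 2 := by linarith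
      _ = _ := by ring
  have hAB : ∀ r ∈ Finset.Ioc Q (2*X), ((A r ∪ B r).card : ℝ) ≤ 8 * X * (1 / (r:ℝ) ^ 2) := by
    intro r hr
    simp only [Finset.mem_Ioc] at hr
    have h1 : ((A r ∪ B r).card : ℝ) ≤ (A r).card + (B r).card := by
      exact_mod_cast Finset.card_union_le _ _
    have h2 := key r (A r) hr.1 (by
      intro p hp; simp only [A, Finset.mem_filter, Finset.mem_Icc] at hp; exact hp.1.2) (by
      intro p hp; simp only [A, Finset.mem_filter, Finset.mem_Icc] at hp
      have := Nat.le_of_dvd (by omega) hp.2.2; omega) (by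
      intro a ha b hb
      simp only [A, Finset.mem_filter, Finset.mem_Icc] at ha hb
      obtain ⟨c, hc⟩ := ha.2.2
      obtain ⟨c', hc'⟩ := hb.2.2
      refine ⟨(c:ℤ) - c', ?_⟩
      have e1 : a = ℓ + r ^ 2 * c := by omega
      have e2 : b = ℓ + r ^ 2 * c' := by omega
      rw [e1, e2]; push_cast; ring)
    have h3 := key r (B r) hr.1 (by
      intro p hp; simp only [B, Finset.mem_filter, Finset.mem_Icc] at hp; exact hp.1.2) (by
      intro p hp; simp only [B, Finset.mem_filter, Finset.mem_Icc] at hp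
      have := Nat.le_of_dvd (by omega) hp.2.2; omega) (by
      intro a ha b hb
      simp only [B, Finset.mem_filter, Finset.mem_Icc] at ha hb
      obtain ⟨c, hc⟩ := ha.2.2
      obtain ⟨c', hc'⟩ := hb.2.2
      refine ⟨(c:ℤ) - c', ?_⟩
      have e1 : (a:ℤ) + ℓ = r ^ 2 * c := by exact_mod_cast hc
      have e2 : (b:ℤ) + ℓ = r ^ 2 * c' := by exact_mod_cast hc'
      push_cast
      linear_combination e1 - e2)
    linarith
  calc (S.card : ℝ) ≤ ∑ r ∈ Finset.Ioc Q (2*X), ((A r ∪ B r).card : ℝ) := by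
        exact_mod_cast (Finset.card_le_card hsub).trans Finset.card_biUnion_le
    _ ≤ ∑ r ∈ Finset.Ioc Q (2*X), 8 * X * (1 / (r:ℝ) ^ 2) := Finset.sum_le_sum hAB
    _ = 8 * X * ∑ r ∈ Finset.Ioc Q (2*X), (1 / (r:ℝ) ^ 2) := by rw [Finset.mul_sum]
    _ ≤ 8 * X * (1 / Q) := by gcongr; exact sq_tail Q _ hQ
    _ = _ := by ring

lemma card_primeFactors_le (d N : ℕ) (hd : d ≠ 0) (hdN : d ≤ N) :
    (d.primeFactors.card : ℝ) ≤ 2 * Real.log N := by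
  have h1 : 2 ^ d.primeFactors.card ≤ d := by
    calc 2 ^ d.primeFactors.card = ∏ p ∈ d.primeFactors, 2 := by simp
      _ ≤ ∏ p ∈ d.primeFactors, p := by
          apply Finset.prod_le_prod'
          intro p hp
          exact (Nat.prime_of_mem_primeFactors hp).two_le
      _ ≤ d := Nat.le_of_dvd (by omega) (Nat.prod_primeFactors_dvd d)
  have h2 : (2:ℝ) ^ d.primeFactors.card ≤ N := by exact_mod_cast h1.trans hdN
  have h3 := Real.log_le_log (by positivity) h2
  rw [Real.log_pow] at h3
  have h4 := Real.log_two_gt_d9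
  have h5 : (0:ℝ) ≤ d.primeFactors.card := by positivity
  nlinarith

open Classical in
lemma case2 (X Q ℓ : ℕ) (T : ℝ) (hT : 1 ≤ T) (hTQ : T ≤ Q) (hX : ℓ ≤ X) :
    (((Finset.Icc 1 X).filter (fun p => ℓ < p ∧ ∃ q m m' a b, q.Prime ∧ Q < q ∧
      p - ℓ = m * (1 + q * a) ∧ p + ℓ = m' * (1 + q * b) ∧ Nat.gcd m m' ∣ 2 ∧ m' ≠ m + 2 * ℓ ∧
      X * T < (((1 + q * a) * (1 + q * b) : ℕ) : ℝ))).card : ℝ) ≤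
      8 * X / T * (1 + Real.log (2 * X : ℕ)) ^ 2 * Real.log (4 * X : ℕ) := by
  set S := (Finset.Icc 1 X).filter (fun p => ℓ < p ∧ ∃ q m m' a b, q.Prime ∧ Q < q ∧
      p - ℓ = m * (1 + q * a) ∧ p + ℓ = m' * (1 + q * b) ∧ Nat.gcd m m' ∣ 2 ∧ m' ≠ m + 2 * ℓ ∧
      X * T < (((1 + q * a) * (1 + q * b) : ℕ) : ℝ)) with hS
  let A : ℕ → ℕ → ℕ → Finset ℕ := fun m m' q => (Finset.Icc 1 X).filter (fun p => ℓ < p ∧ ∃ a b,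
      q.Prime ∧ Q < q ∧
      p - ℓ = m * (1 + q * a) ∧ p + ℓ = m' * (1 + q * b) ∧ Nat.gcd m m' ∣ 2 ∧ m' ≠ m + 2 * ℓ ∧
      X * T < (((1 + q * a) * (1 + q * b) : ℕ) : ℝ))
  have hsub : S ⊆ (Finset.Icc 1 (2*X)).biUnion (fun m => (Finset.Icc 1 (2*X)).biUnion
      (fun m' => ((m:ℤ) + 2 * ℓ - m').natAbs.primeFactors.biUnion (fun q => A m m' q))) := by
    intro p hp
    simp only [hS, Finset.mem_filter, Finset.mem_Icc] at hp
    obtain ⟨⟨hp1, hp2⟩, hl, q, m, m', a, b, hq, hQq, h1, h2, h3, h4, h5⟩ := hp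
    have l1 : m ≤ p - ℓ := Nat.le_of_dvd (by omega) ⟨_, h1⟩
    have l2 : m' ≤ p + ℓ := Nat.le_of_dvd (by omega) ⟨_, h2⟩
    have l3 : 0 < m := by
      rcases Nat.eq_zero_or_pos m with h | h
      · rw [h] at h1; omega
      · exact h
    have l4 : 0 < m' := by
      rcases Nat.eq_zero_or_pos m' with h | h
      · rw [h] at h2; omega
      · exact h
    simp only [Finset.mem_biUnion, Finset.mem_Ioc, Finset.mem_Icc, A, Finset.mem_filter]
    refine ⟨m, ⟨l3, by omega⟩, m', ⟨l4, by omega⟩, q, ?_, ⟨hp1, hp2⟩, hl, a, b, hq, hQq, h1, h2, h3, h4, h5⟩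
    rw [Nat.mem_primeFactors]
    refine ⟨hq, ?_, by omega⟩
    rw [← Int.natCast_dvd]
    have e1 : (p:ℤ) = ℓ + m * (1 + q * a) := by
      have : p = ℓ + m * (1 + q * a) := by omega
      exact_mod_cast this
    have e2 : (p:ℤ) + ℓ = m' * (1 + q * b) := by exact_mod_cast h2
    refine ⟨(m':ℤ) * b - m * a, ?_⟩
    linear_combination -e1 + e2
  have hA : ∀ m ∈ Finset.Icc 1 (2*X), ∀ m' ∈ Finset.Icc 1 (2*X), ∀ q : ℕ,
      ((A m m' q).card : ℝ) ≤ 4 * X / T * ((1 / m) * (1 / m')) := by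
    intro m hm m' hm' q
    simp only [Finset.mem_Icc] at hm hm'
    rcases (A m m' q).eq_empty_or_nonempty with he | ⟨p0, hp0⟩
    · rw [he]; simp; positivity
    simp only [A, Finset.mem_filter, Finset.mem_Icc] at hp0
    obtain ⟨⟨hp1, hp2⟩, hl, a, b, hq, hQq, h1, h2, h3, h4, h5⟩ := hp0
    have := card_of_congr (A m m' q) X (q * (m * m'))
      (by intro p hp; simp only [A, Finset.mem_filter, Finset.mem_Icc] at hp; exact hp.1.2)
      (by
        intro p hp p' hp'
        simp only [A, Finset.mem_filter, Finset.mem_Icc] at hp hp'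
        obtain ⟨_, _, a, b, _, _, f1, f2, _⟩ := hp
        obtain ⟨_, _, a', b', _, _, g1, g2, _⟩ := hp'
        have e1 : (p:ℤ) = ℓ + m * (1 + q * a) := by
          have : p = ℓ + m * (1 + q * a) := by omega
          exact_mod_cast this
        have e2 : (p:ℤ) + ℓ = m' * (1 + q * b) := by exact_mod_cast f2
        have e1' : (p':ℤ) = ℓ + m * (1 + q * a') := by
          have : p' = ℓ + m * (1 + q * a') := by omega
          exact_mod_cast this
        have e2' : (p':ℤ) + ℓ = m' * (1 + q * b') := by exact_mod_cast g2
        obtain ⟨c, hc⟩ := h3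
        have hb := Nat.gcd_eq_gcd_ab m m'
        have hc' : (2:ℤ) = (m.gcd m' : ℤ) * c := by exact_mod_cast hc
        refine ⟨c * (m.gcdA m' * ((b:ℤ) - b') + m.gcdB m' * ((a:ℤ) - a')), ?_⟩
        have d1 : (p:ℤ) - p' = m * q * (a - a') := by linear_combination e1 - e1'
        have d2 : (p:ℤ) - p' = m' * q * (b - b') := by linear_combination e2 - e2'
        push_cast
        rw [hc', hb]
        linear_combination (c * m * m.gcdA m' : ℤ) * d2 + (c * m' * m.gcdB m' : ℤ) * d1)
    refine this.trans ?_
    have hm0 : (0:ℝ) < m := by exact_mod_cast hm.1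
    have hm0' : (0:ℝ) < m' := by exact_mod_cast hm'.1
    have hq0 : (0:ℝ) < q := by exact_mod_cast hq.pos
    have hX0 : (0:ℝ) ≤ X := by positivity
    have hX1 : (0:ℝ) < X := by have : 0 < X := by omega
                               exact_mod_cast this
    have hTq : T ≤ q := hTQ.trans (by exact_mod_cast hQq.le)
    have hmm : (m:ℝ) * m' * T ≤ 2 * X := by
      have k1 : (m * (1 + q * a)) * (m' * (1 + q * b)) ≤ X * (2 * X) := by
        rw [← h1, ← h2]
        exact Nat.mul_le_mul (by omega) (by omega)
      have k2 : ((m:ℝ) * m') * (((1 + q * a) * (1 + q * b) : ℕ) : ℝ) ≤ X * (2 * X) := by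
        have : (m * m') * ((1 + q * a) * (1 + q * b)) ≤ X * (2 * X) := by
          calc _ = (m * (1 + q * a)) * (m' * (1 + q * b)) := by ring
            _ ≤ _ := k1
        exact_mod_cast this
      have k3 : ((m:ℝ) * m') * (X * T) ≤ X * (2 * X) :=
        (mul_le_mul_of_nonneg_left h5.le (by positivity)).trans k2
      have k4 : (X:ℝ) * ((m:ℝ) * m' * T) ≤ X * (2 * X) := by linarith
      exact le_of_mul_le_mul_left k4 hX1
    have hT0 : 0 < T := by linarith
    push_cast
    calc (2:ℝ) * X / (q * (m * m')) + 1 ≤ 2 * X / (T * (m * m')) + 2 * X / (T * (m * m')) := by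
          gcongr
          rw [le_div_iff₀ (by positivity)]; linarith
      _ = _ := by field_simp; ring
  have h1 : (S.card : ℝ) ≤ ∑ m ∈ Finset.Icc 1 (2*X), ∑ m' ∈ Finset.Icc 1 (2*X),
      ∑ q ∈ ((m:ℤ) + 2 * ℓ - m').natAbs.primeFactors, ((A m m' q).card : ℝ) := by
    have := Finset.card_le_card hsub
    have h2 : S.card ≤ ∑ m ∈ Finset.Icc 1 (2*X), ∑ m' ∈ Finset.Icc 1 (2*X),
      ∑ q ∈ ((m:ℤ) + 2 * ℓ - m').natAbs.primeFactors, (A m m' q).card := by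
      refine this.trans (Finset.card_biUnion_le.trans ?_)
      refine Finset.sum_le_sum fun q _ => Finset.card_biUnion_le.trans ?_
      exact Finset.sum_le_sum fun a _ => Finset.card_biUnion_le
    exact_mod_cast h2
  refine h1.trans ?_
  have hT0 : 0 < T := by linarith
  calc _ ≤ ∑ m ∈ Finset.Icc 1 (2*X), ∑ m' ∈ Finset.Icc 1 (2*X),
        (2 * Real.log (4 * X : ℕ)) * (4 * X / T * ((1 / (m:ℝ)) * (1 / m'))) := by
        refine Finset.sum_le_sum fun m hm => Finset.sum_le_sum fun m' hm' => ?_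
        calc _ ≤ ∑ q ∈ ((m:ℤ) + 2 * ℓ - m').natAbs.primeFactors, 4 * X / T * ((1 / (m:ℝ)) * (1 / m')) :=
              Finset.sum_le_sum fun q _ => hA m hm m' hm' q
          _ = (((m:ℤ) + 2 * ℓ - m').natAbs.primeFactors.card : ℝ) * (4 * X / T * ((1 / (m:ℝ)) * (1 / m'))) := by
              rw [Finset.sum_const, nsmul_eq_mul]
          _ ≤ _ := by
              gcongr
              simp only [Finset.mem_Icc] at hm hm'
              by_cases h0 : ((m:ℤ) + 2 * ℓ - m').natAbs = 0
              · rw [h0]; simp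
                have : (1:ℝ) ≤ 4 * X := by
                  have : 1 ≤ 4 * X := by omega
                  exact_mod_cast this
                exact Real.log_nonneg this
              · exact card_primeFactors_le _ _ h0 (by omega)
    _ = (2 * Real.log (4 * X : ℕ)) * (4 * X / T * (∑ a ∈ Finset.Icc 1 (2*X), (1:ℝ) / a) ^ 2) := by
        simp only [← Finset.mul_sum, ← Finset.sum_mul]
        ring
    _ ≤ (2 * Real.log (4 * X : ℕ)) * (4 * X / T * (1 + Real.log (2 * X : ℕ)) ^ 2) := by
        have : 0 ≤ Real.log (4 * X : ℕ) := by
          exact Real.log_natCast_nonneg _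
        gcongr
        exact harm_le _
    _ = _ := by ring

lemma tot_aux (m m' P : ℕ) (hm : 0 < m) (hm' : 0 < m')
    (h : m.totient * m' = m'.totient * m) (hP : P ∈ m.primeFactors)
    (hmax : ∀ p ∈ m.primeFactors, p ≤ P) : P ∈ m'.primeFactors := by
  have h1 := Nat.totient_mul_prod_primeFactors m
  have h2 := Nat.totient_mul_prod_primeFactors m'
  set R := ∏ p ∈ m.primeFactors, p
  set R' := ∏ p ∈ m'.primeFactors, p
  set U := ∏ p ∈ m.primeFactors, (p - 1)
  set U' := ∏ p ∈ m'.primeFactors, (p - 1)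
  have h3 : R' * U = R * U' := by
    have : (m * m') * (R' * U) = (m * m') * (R * U') := by
      calc (m * m') * (R' * U) = m' * R' * (m * U) := by ring
        _ = m' * R' * (m.totient * R) := by rw [h1]
        _ = (m.totient * m') * R * R' := by ring
        _ = (m'.totient * R') * m * R := by rw [h]; ring
        _ = _ := by rw [h2]; ring
    exact Nat.eq_of_mul_eq_mul_left (by positivity) this
  have hPp := Nat.prime_of_mem_primeFactors hP
  have h4 : P ∣ R' * U := by
    rw [h3]
    exact Dvd.dvd.mul_right (Finset.dvd_prod_of_mem _ hP) _
  rcases hPp.dvd_mul.mp h4 with h5 | h5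
  · obtain ⟨p, hp, hd⟩ := (Prime.dvd_finsetProd_iff hPp.prime _).mp h5
    have := (Nat.prime_dvd_prime_iff_eq hPp (Nat.prime_of_mem_primeFactors hp)).mp hd
    rw [this]; exact hp
  · obtain ⟨p, hp, hd⟩ := (Prime.dvd_finsetProd_iff hPp.prime _).mp h5
    have h6 := (Nat.prime_of_mem_primeFactors hp).two_le
    have h7 := Nat.le_of_dvd (by omega) hd
    have := hmax p hp
    omega

lemma ratio_eq (m ℓ : ℕ) (hm : 0 < m) (hl : 0 < ℓ) (hg : Nat.gcd m (m + 2 * ℓ) ∣ 2)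
    (h : m.totient * (m + 2 * ℓ) = (m + 2 * ℓ).totient * m) : m = 2 := by
  set m' := m + 2 * ℓ with hm'
  have hall : ∀ p ∈ m.primeFactors ∪ m'.primeFactors, p = 2 := by
    intro p hp
    obtain ⟨P, hP, hmax⟩ := Finset.exists_max_image (m.primeFactors ∪ m'.primeFactors) id ⟨p, hp⟩
    simp only [id] at hmax
    have h1 : P ∈ m.primeFactors ∧ P ∈ m'.primeFactors := by
      rcases Finset.mem_union.mp hP with h1 | h1
      · exact ⟨h1, tot_aux m m' P hm (by omega) h h1 (fun p hp => hmax p (Finset.mem_union_left _ hp))⟩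
      · exact ⟨tot_aux m' m P (by omega) hm h.symm h1 (fun p hp => hmax p (Finset.mem_union_right _ hp)), h1⟩
    have h2 : P ∣ 2 := (Nat.dvd_gcd (Nat.dvd_of_mem_primeFactors h1.1) (Nat.dvd_of_mem_primeFactors h1.2)).trans hg
    have h3 := Nat.le_of_dvd (by norm_num) h2
    have h4 := hmax p hp
    have h5 : p.Prime := by
      rcases Finset.mem_union.mp hp with h | h <;> exact Nat.prime_of_mem_primeFactors h
    have := h5.two_le
    omega
  have e1 : m = 2 ^ m.primeFactorsList.length := Nat.eq_prime_pow_of_unique_prime_dvd (by omega) (by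
    intro d hd hdm
    exact hall d (Finset.mem_union_left _ (Nat.mem_primeFactors.mpr ⟨hd, hdm, by omega⟩)))
  have e2 : m' = 2 ^ m'.primeFactorsList.length := Nat.eq_prime_pow_of_unique_prime_dvd (by omega) (by
    intro d hd hdm
    exact hall d (Finset.mem_union_right _ (Nat.mem_primeFactors.mpr ⟨hd, hdm, by omega⟩)))
  have hd : m ∣ m' := by
    rw [e1, e2]
    apply pow_dvd_pow
    by_contra hlt
    push Not at hlt
    have := Nat.pow_le_pow_right (n := 2) (by norm_num) hlt.le
    rw [← e1, ← e2] at this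
    omega
  rw [Nat.gcd_eq_left hd] at hg
  have := Nat.le_of_dvd (by norm_num) hg
  have hne : m ≠ 1 := by
    intro h1
    rw [h1] at hm'
    rcases Nat.eq_zero_or_pos m'.primeFactorsList.length with h0 | h0
    · rw [h0] at e2; omega
    · have : 2 ∣ m' := by rw [e2]; exact dvd_pow_self 2 (by omega)
      omega
  omega

lemma prime_dvd_totient (q N : ℕ) (hq : q.Prime) (hN : N ≠ 0) (h : q ∣ N.totient) :
    q ^ 2 ∣ N ∨ ∃ p, p.Prime ∧ p ∣ N ∧ q ∣ p - 1 := by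
  rw [Nat.totient_eq_prod_factorization hN] at h
  obtain ⟨p, hp, hd⟩ := (Prime.dvd_finsetProd_iff hq.prime _).mp h
  have hp' : p ∈ N.primeFactors := by simpa using hp
  have hpp := Nat.prime_of_mem_primeFactors hp'
  rcases hq.dvd_mul.mp hd with h1 | h1
  · left
    have h2 := hq.dvd_of_dvd_pow h1
    have h3 : q = p := (Nat.prime_dvd_prime_iff_eq hq hpp).mp h2
    have h4 : N.factorization p - 1 ≠ 0 := by
      intro h0
      rw [h0] at h1
      simp at h1
      exact hq.one_lt.ne' h1
    rw [h3, hpp.pow_dvd_iff_le_factorization hN]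
    omega
  · right
    exact ⟨p, hpp, Nat.dvd_of_mem_primeFactors hp', h1⟩

lemma structural (n ℓ Q p : ℕ) (B : ℝ) (hn : 1 ≤ n) (hℓ : ℓ = 4 ^ n - 1) (hQ : 2 ≤ Q) (hp : p.Prime)
    (hlp : ℓ < p) (htot : Nat.totient (p - ℓ) = Nat.totient (p + ℓ)) :
    (∀ r, r.Prime → r ∣ p - ℓ → ∀ q, q.Prime → q ∣ r - 1 → q ≤ Q) ∨
    (∃ r, Q < r ∧ (r ^ 2 ∣ p - ℓ ∨ r ^ 2 ∣ p + ℓ)) ∨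
    (∃ q a b, Q < q ∧ 1 ≤ a ∧ 1 ≤ b ∧
      (1 + q * a) ∣ p - ℓ ∧ (1 + q * b) ∣ p + ℓ ∧ Nat.Coprime (1 + q * a) (1 + q * b) ∧
      (((1 + q * a) * (1 + q * b) : ℕ) : ℝ) ≤ B) ∨
    (∃ q m m' a b, q.Prime ∧ Q < q ∧
      p - ℓ = m * (1 + q * a) ∧ p + ℓ = m' * (1 + q * b) ∧ Nat.gcd m m' ∣ 2 ∧ m' ≠ m + 2 * ℓ ∧
      B < (((1 + q * a) * (1 + q * b) : ℕ) : ℝ)) ∨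
    (∃ r, 1 ≤ r ∧ (r + 1).Prime ∧ (4 ^ n * r + 1).Prime ∧ p = 2 * 4 ^ n * r + 4 ^ n + 1) := by
  have h4n : 4 ≤ 4 ^ n := by
    calc 4 = 4 ^ 1 := by norm_num
      _ ≤ 4 ^ n := Nat.pow_le_pow_right (by norm_num) hn
  have hgcd : Nat.gcd (p - ℓ) (p + ℓ) ∣ 2 := by
    have c : Nat.Coprime p ℓ := by
      rw [hp.coprime_iff_not_dvd]
      intro h
      have := Nat.le_of_dvd (by omega) h
      omega
    have d1 : Nat.gcd (p - ℓ) (p + ℓ) ∣ 2 * p := by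
      have := dvd_add (Nat.gcd_dvd_left (p - ℓ) (p + ℓ)) (Nat.gcd_dvd_right (p - ℓ) (p + ℓ))
      have e : p - ℓ + (p + ℓ) = 2 * p := by omega
      rwa [e] at this
    have d2 : Nat.gcd (p - ℓ) (p + ℓ) ∣ 2 * ℓ := by
      have := Nat.dvd_sub (Nat.gcd_dvd_right (p - ℓ) (p + ℓ)) (Nat.gcd_dvd_left (p - ℓ) (p + ℓ))
      have e : p + ℓ - (p - ℓ) = 2 * ℓ := by omega
      rwa [e] at this
    have := Nat.dvd_gcd d1 d2
    rwa [Nat.gcd_mul_left, c.gcd_eq_one, mul_one] at this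
  by_cases hA : ∀ r, r.Prime → r ∣ p - ℓ → ∀ q, q.Prime → q ∣ r - 1 → q ≤ Q
  · exact Or.inl hA
  right
  by_cases hS : ∃ r, Q < r ∧ (r ^ 2 ∣ p - ℓ ∨ r ^ 2 ∣ p + ℓ)
  · exact Or.inl hS
  right
  push Not at hA hS
  obtain ⟨u, hu, hun, q, hq, hqu, hQq⟩ := hA
  have hqt : q ∣ Nat.totient (p + ℓ) := by
    rw [← htot]
    have : u.totient ∣ (p - ℓ).totient := Nat.totient_dvd_of_dvd hun
    rw [Nat.totient_prime hu] at this
    exact hqu.trans this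
  rcases prime_dvd_totient q (p + ℓ) hq (by omega) hqt with h1 | ⟨v, hv, hvn, hqv⟩
  · exact absurd h1 (hS q hQq).2
  have hu2 := hu.two_le
  have hv2 := hv.two_le
  obtain ⟨a, ha⟩ := hqu
  obtain ⟨b, hb⟩ := hqv
  have ha' : u = 1 + q * a := by omega
  have hb' : v = 1 + q * b := by omega
  have ha1 : 1 ≤ a := by
    rcases Nat.eq_zero_or_pos a with h | h
    · rw [h] at ha'; omega
    · exact h
  have hb1 : 1 ≤ b := by
    rcases Nat.eq_zero_or_pos b with h | h
    · rw [h] at hb'; omega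
    · exact h
  have hqu' : q < u := by
    have : q ≤ q * a := Nat.le_mul_of_pos_right _ ha1
    omega
  have hqv' : q < v := by
    have : q ≤ q * b := Nat.le_mul_of_pos_right _ hb1
    omega
  have hne : u ≠ v := by
    intro h
    have := Nat.le_of_dvd (by norm_num) ((Nat.dvd_gcd hun (h ▸ hvn)).trans hgcd)
    omega
  by_cases hB : ((u * v : ℕ) : ℝ) ≤ B
  · left
    refine ⟨q, a, b, hQq, ha1, hb1, ?_⟩
    rw [← ha', ← hb']
    exact ⟨hun, hvn, (Nat.coprime_primes hu hv).mpr hne, hB⟩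
  right
  obtain ⟨m, hm⟩ := hun
  obtain ⟨m', hm'⟩ := hvn
  have hmg : Nat.gcd m m' ∣ 2 := by
    refine dvd_trans (Nat.dvd_gcd ?_ ?_) hgcd
    · exact (Nat.gcd_dvd_left m m').trans ⟨u, by rw [hm]; ring⟩
    · exact (Nat.gcd_dvd_right m m').trans ⟨v, by rw [hm']; ring⟩
  by_cases hmm : m' = m + 2 * ℓ
  swap
  · left
    refine ⟨q, m, m', a, b, hq, hQq, ?_⟩
    rw [← ha', ← hb']
    exact ⟨by rw [hm]; ring, by rw [hm']; ring, hmg, hmm, not_le.mp hB⟩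
  right
  have hm0 : 0 < m := by
    rcases Nat.eq_zero_or_pos m with h | h
    · rw [h] at hm; omega
    · exact h
  have t1 : Nat.totient (p - ℓ) = (u - 1) * m.totient := by
    rw [hm, Nat.totient_mul, Nat.totient_prime hu]
    rw [hu.coprime_iff_not_dvd]
    rintro ⟨c, hc⟩
    exact (hS u (by omega)).1 ⟨c, by rw [hm, hc]; ring⟩
  have t2 : Nat.totient (p + ℓ) = (v - 1) * m'.totient := by
    rw [hm', Nat.totient_mul, Nat.totient_prime hv]
    rw [hv.coprime_iff_not_dvd]
    rintro ⟨c, hc⟩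
    exact (hS v (by omega)).2 ⟨c, by rw [hm', hc]; ring⟩
  have t3 : (u - 1) * m.totient = (v - 1) * m'.totient := by rw [← t1, ← t2, htot]
  rw [ha, hb] at t3
  have t4 : q * (a * m.totient) = q * (b * m'.totient) := by linarith
  have t5 := Nat.eq_of_mul_eq_mul_left hq.pos t4
  have t6 : m * a = m' * b := by
    have e1 : u * m + 2 * ℓ = v * m' := by omega
    rw [ha', hb', hmm] at e1
    have : q * (m * a) = q * (m' * b) := by rw [hmm]; linarith
    exact Nat.eq_of_mul_eq_mul_left hq.pos this
  have t7 : m.totient * m' = m'.totient * m := by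
    have : (a * b) * (m.totient * m') = (a * b) * (m'.totient * m) := by
      calc (a * b) * (m.totient * m') = (a * m.totient) * (m' * b) := by ring
        _ = _ := by rw [t5, ← t6]; ring
    exact Nat.eq_of_mul_eq_mul_left (by positivity) this
  rw [hmm] at hmg t7
  have hm2 := ratio_eq m ℓ hm0 (by omega) hmg t7
  have hm'2 : m' = 2 * 4 ^ n := by omega
  rw [hm2, hm'2] at t6
  have t8 : a = 4 ^ n * b := by linarith
  refine ⟨q * b, Nat.mul_pos hq.pos hb1, by rw [add_comm, ← hb']; exact hv, ?_, ?_⟩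
  · have : 4 ^ n * (q * b) + 1 = u := by rw [ha', t8]; ring
    rw [this]; exact hu
  · have : p + ℓ = 2 * 4 ^ n * (q * b) + 2 * 4 ^ n := by rw [hm', hm'2, hb']; ring
    omega

lemma recip_primes (J : ℕ) (hJ : 1 ≤ J) :
    ∑ r ∈ (Finset.Icc 1 (2 ^ J)).filter Nat.Prime, (1:ℝ) / r ≤ 5 + 4 * Real.log J := by
  have h : ∀ J : ℕ, 1 ≤ J → ∑ r ∈ (Finset.Icc 1 (2 ^ J)).filter Nat.Prime, (1:ℝ) / r ≤
      1 + 4 * ∑ j ∈ Finset.Ico 1 J, (1:ℝ) / j := by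
    intro J hJ
    induction J, hJ using Nat.le_induction with
    | base =>
      have : (Finset.Icc 1 (2 ^ 1)).filter Nat.Prime = {2} := by decide
      rw [this]; norm_num
    | succ J hJ ih =>
      have hsplit : (Finset.Icc 1 (2 ^ (J+1))).filter Nat.Prime =
          (Finset.Icc 1 (2 ^ J)).filter Nat.Prime ∪ (Finset.Ioc (2 ^ J) (2 ^ (J+1))).filter Nat.Prime := by
        rw [← Finset.filter_union]
        congr 1
        ext a
        have : 2 ^ J ≤ 2 ^ (J + 1) := Nat.pow_le_pow_right (by norm_num) (by omega)
        have : 1 ≤ 2 ^ J := Nat.one_le_two_pow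
        simp only [Finset.mem_union, Finset.mem_Icc, Finset.mem_Ioc]
        omega
      have hdisj : Disjoint ((Finset.Icc 1 (2 ^ J)).filter Nat.Prime)
          ((Finset.Ioc (2 ^ J) (2 ^ (J+1))).filter Nat.Prime) := by
        rw [Finset.disjoint_left]
        intro a ha hb
        simp only [Finset.mem_filter, Finset.mem_Icc, Finset.mem_Ioc] at ha hb
        omega
      rw [hsplit, Finset.sum_union hdisj, Finset.sum_Ico_succ_top hJ]
      have hl2 : 0 < Real.log 2 := Real.log_pos (by norm_num)
      have hJ0 : (0:ℝ) < J := by exact_mod_cast hJ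
      have hθ := Chebyshev.theta_le_log4_mul_x (x := ((2 ^ (J+1) : ℕ) : ℝ)) (by positivity)
      have hlog4 : Real.log 4 = 2 * Real.log 2 := by
        rw [show (4:ℝ) = 2 ^ 2 by norm_num, Real.log_pow]; norm_num
      have hbound : ∑ r ∈ (Finset.Ioc (2 ^ J) (2 ^ (J+1))).filter Nat.Prime, (1:ℝ) / r ≤ 4 * (1 / (J:ℝ)) := by
        calc _ ≤ ∑ r ∈ (Finset.Ioc (2 ^ J) (2 ^ (J+1))).filter Nat.Prime,
              Real.log r * (1 / (2 ^ J * (J * Real.log 2))) := by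
              apply Finset.sum_le_sum
              intro r hr
              simp only [Finset.mem_filter, Finset.mem_Ioc] at hr
              have hr1 : (2:ℝ) ^ J ≤ r := by exact_mod_cast hr.1.1.le
              have hr0 : (0:ℝ) < 2 ^ J := by positivity
              have hlr : J * Real.log 2 ≤ Real.log r := by
                rw [← Real.log_pow]
                exact Real.log_le_log hr0 hr1
              rw [mul_one_div, div_le_div_iff₀ (by linarith) (by positivity)]
              rw [one_mul, mul_comm]
              gcongr
          _ = (∑ r ∈ (Finset.Ioc (2 ^ J) (2 ^ (J+1))).filter Nat.Prime, Real.log r) *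
              (1 / (2 ^ J * (J * Real.log 2))) := by rw [Finset.sum_mul]
          _ ≤ (Real.log 4 * ((2 ^ (J+1) : ℕ) : ℝ)) * (1 / (2 ^ J * (J * Real.log 2))) := by
              gcongr
              refine le_trans ?_ hθ
              rw [Chebyshev.theta_eq_sum_Icc, Nat.floor_natCast]
              apply Finset.sum_le_sum_of_subset_of_nonneg
              · intro a ha
                simp only [Finset.mem_filter, Finset.mem_Ioc, Finset.mem_Icc] at ha ⊢
                exact ⟨⟨by omega, ha.1.2⟩, ha.2⟩
              · intro i _ _
                exact Real.log_natCast_nonneg i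
          _ = 4 * (1 / (J:ℝ)) := by
              rw [hlog4]; push_cast; rw [pow_succ]; field_simp; norm_num
      linarith
  have h1 := h J hJ
  have h2 := harm_le J
  have h3 : ∑ j ∈ Finset.Ico 1 J, (1:ℝ) / j ≤ ∑ j ∈ Finset.Icc 1 J, (1:ℝ) / j :=
    Finset.sum_le_sum_of_subset_of_nonneg Finset.Ico_subset_Icc_self (fun _ _ _ => by positivity)
  linarith

lemma inv_le_exp (t : ℝ) (h0 : 0 ≤ t) (h1 : t ≤ 3/4) : (1 - t)⁻¹ ≤ Real.exp (4 * t) := by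
  rw [inv_le_iff_one_le_mul₀ (by linarith)]
  have := Real.add_one_le_exp (4 * t)
  calc (1:ℝ) ≤ (4 * t + 1) * (1 - t) := by nlinarith
    _ ≤ _ := by gcongr; linarith

lemma rankin (σ : ℝ) (hσ : 1/2 ≤ σ) (s F : Finset ℕ)
    (hF : ∀ m ∈ F, m ≠ 0 ∧ ∀ p, p.Prime → p ∣ m → p ∈ s) :
    ∑ m ∈ F, (m:ℝ) ^ (-σ) ≤ Real.exp (4 * ∑ p ∈ s with p.Prime, (p:ℝ) ^ (-σ)) := by
  let f : ℕ →* ℝ :=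
    { toFun := fun m => (m:ℝ) ^ (-σ)
      map_one' := by simp
      map_mul' := by
        intro a b
        push_cast
        exact Real.mul_rpow (by positivity) (by positivity) }
  have hf : ∀ m : ℕ, f m = (m:ℝ) ^ (-σ) := fun m => rfl
  have hfb : ∀ {p : ℕ}, p.Prime → f p ≤ 3/4 := by
    intro p hp
    rw [hf]
    have h2 : (2:ℝ) ≤ p := by exact_mod_cast hp.two_le
    calc (p:ℝ) ^ (-σ) ≤ (2:ℝ) ^ (-σ) := Real.rpow_le_rpow_of_nonpos (by norm_num) h2 (by linarith)
      _ ≤ (2:ℝ) ^ (-(1/2):ℝ) := Real.rpow_le_rpow_of_exponent_le (by norm_num) (by linarith)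
      _ ≤ 3/4 := by
        rw [Real.rpow_neg (by norm_num), ← Real.sqrt_eq_rpow]
        rw [inv_le_comm₀ (by positivity) (by norm_num)]
        apply Real.le_sqrt_of_sq_le
        norm_num
  have hf0 : ∀ m : ℕ, 0 ≤ f m := by intro m; rw [hf]; positivity
  have := EulerProduct.summable_and_hasSum_factoredNumbers_prod_filter_prime_geometric (f := f)
    (by intro p hp; rw [Real.norm_of_nonneg (hf0 p)]; linarith [hfb hp]) s
  obtain ⟨_, hsum⟩ := this
  have hmem : ∀ m ∈ F, m ∈ Nat.factoredNumbers s := by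
    intro m hm
    rw [Nat.mem_factoredNumbers]
    refine ⟨(hF m hm).1, fun p hp => ?_⟩
    exact (hF m hm).2 p (Nat.prime_of_mem_primeFactorsList hp) (Nat.dvd_of_mem_primeFactorsList hp)
  have h1 : ∑ m ∈ F, (m:ℝ) ^ (-σ) ≤ ∏ p ∈ s with p.Prime, (1 - f p)⁻¹ := by
    have h2 := sum_le_hasSum (F.subtype (· ∈ Nat.factoredNumbers s)) (fun i _ => hf0 i) hsum
    rw [Finset.sum_subtype_of_mem (fun m => f m) hmem] at h2
    exact h2
  refine h1.trans ?_
  rw [Finset.mul_sum, Real.exp_sum]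
  apply Finset.prod_le_prod
  · intro p hp
    have := hfb (Finset.mem_filter.mp hp).2
    rw [inv_nonneg]; linarith
  · intro p hp
    exact inv_le_exp _ (hf0 p) (hfb (Finset.mem_filter.mp hp).2)

open Classical in
lemma smooth_count : ∃ K : ℝ, 0 < K ∧ ∀ J X : ℕ, 2 ≤ J → 1 ≤ X →
    (((Finset.Icc 1 X).filter (fun n => ∀ r, r.Prime → r ∣ n → ∀ q, q.Prime → q ∣ r - 1 → q ≤ 2 ^ J)).card : ℝ)
      ≤ (X:ℝ) ^ (1 - 1 / (J:ℝ)) * Real.exp (K * (J:ℝ) ^ 32) := by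
  refine ⟨4 * Real.exp 40, by positivity, ?_⟩
  intro J X hJ hX
  set E := (Finset.Icc 1 X).filter (fun n => ∀ r, r.Prime → r ∣ n → ∀ q, q.Prime → q ∣ r - 1 → q ≤ 2 ^ J) with hE
  set σ : ℝ := 1 - 1 / (J:ℝ) with hσ
  have hJ2 : (2:ℝ) ≤ J := by exact_mod_cast hJ
  have hJ0 : (0:ℝ) < J := by linarith
  have hσ2 : 1/2 ≤ σ := by
    have : 1 / (J:ℝ) ≤ 1 / 2 := one_div_le_one_div_of_le (by norm_num) hJ2
    linarith
  set S := (Finset.Icc 1 X).filter (fun r => r.Prime ∧ ∀ q, q.Prime → q ∣ r - 1 → q ≤ 2 ^ J) with hS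
  have hS1 : ∑ p ∈ S with p.Prime, (p:ℝ) ^ (-σ) ≤ Real.exp 40 * (J:ℝ) ^ 32 := by
    have a1 : ∑ p ∈ S with p.Prime, (p:ℝ) ^ (-σ) ≤ ∑ p ∈ S, ((p - 1 : ℕ):ℝ) ^ (-σ) := by
      refine (Finset.sum_le_sum_of_subset_of_nonneg (Finset.filter_subset _ _) (fun _ _ _ => by positivity)).trans ?_
      apply Finset.sum_le_sum
      intro p hp
      simp only [hS, Finset.mem_filter, Finset.mem_Icc] at hp
      have := hp.2.1.two_le
      have h1 : (0:ℝ) < ((p - 1 : ℕ):ℝ) := by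
        have : 0 < p - 1 := by omega
        exact_mod_cast this
      apply Real.rpow_le_rpow_of_nonpos h1 _ (by linarith)
      exact_mod_cast Nat.sub_le p 1
    have a2 : ∑ p ∈ S, ((p - 1 : ℕ):ℝ) ^ (-σ) = ∑ m ∈ S.image (fun p : ℕ => p - 1), (((m:ℕ)):ℝ) ^ (-σ) := by
      rw [Finset.sum_image]
      intro a ha b hb hab
      simp only [hS, Finset.coe_filter, Set.mem_setOf_eq, Finset.mem_Icc] at ha hb hab
      omega
    have a3 := rankin σ hσ2 (Finset.Icc 1 (2 ^ J)) (S.image (fun p => p - 1)) (by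
      intro m hm
      simp only [Finset.mem_image, hS, Finset.mem_filter, Finset.mem_Icc] at hm
      obtain ⟨r, ⟨_, hr, hq⟩, rfl⟩ := hm
      have := hr.two_le
      refine ⟨by omega, fun p hp hd => ?_⟩
      simp only [Finset.mem_Icc]
      exact ⟨hp.one_le, hq p hp hd⟩)
    have a4 : ∑ p ∈ Finset.Icc (1:ℕ) (2 ^ J) with p.Prime, (p:ℝ) ^ (-σ) ≤ 2 * (5 + 4 * Real.log J) := by
      calc _ ≤ ∑ p ∈ Finset.Icc (1:ℕ) (2 ^ J) with p.Prime, 2 * ((1:ℝ) / p) := by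
            apply Finset.sum_le_sum
            intro p hp
            simp only [Finset.mem_filter, Finset.mem_Icc] at hp
            have hp0 : (0:ℝ) < p := by exact Nat.cast_pos.mpr hp.1.1
            have : -σ = 1 / (J:ℝ) + (-1) := by rw [hσ]; ring
            rw [this, Real.rpow_add hp0, Real.rpow_neg_one, one_div (p:ℝ)]
            gcongr
            calc (p:ℝ) ^ (1 / (J:ℝ)) ≤ ((2:ℝ) ^ J) ^ (1 / (J:ℝ)) := by
                  gcongr
                  exact_mod_cast hp.1.2
              _ = 2 := by
                  rw [one_div]
                  exact Real.pow_rpow_inv_natCast (by norm_num) (by omega)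
        _ = 2 * ∑ p ∈ Finset.Icc (1:ℕ) (2 ^ J) with p.Prime, ((1:ℝ) / p) := by rw [Finset.mul_sum]
        _ ≤ _ := by
            gcongr
            exact recip_primes J (by omega)
    rw [a2] at a1
    refine a1.trans (a3.trans ?_)
    calc Real.exp (4 * ∑ p ∈ Finset.Icc (1:ℕ) (2 ^ J) with p.Prime, (p:ℝ) ^ (-σ))
        ≤ Real.exp (40 + (32:ℕ) * Real.log J) := by
          apply Real.exp_le_exp.mpr
          push_cast
          linarith
      _ = _ := by
          rw [Real.exp_add, Real.exp_nat_mul, Real.exp_log hJ0]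
  have hE1 := rankin σ hσ2 S E (by
    intro n hn
    simp only [hE, Finset.mem_filter, Finset.mem_Icc] at hn
    refine ⟨by omega, fun p hp hd => ?_⟩
    simp only [hS, Finset.mem_filter, Finset.mem_Icc]
    have := Nat.le_of_dvd (by omega) hd
    exact ⟨⟨hp.one_le, by omega⟩, hp, hn.2 p hp hd⟩)
  have hX0 : (0:ℝ) < X := by exact_mod_cast hX
  calc (E.card : ℝ) = ∑ n ∈ E, (1:ℝ) := by simp
    _ ≤ ∑ n ∈ E, (X:ℝ) ^ σ * (n:ℝ) ^ (-σ) := by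
        apply Finset.sum_le_sum
        intro n hn
        simp only [hE, Finset.mem_filter, Finset.mem_Icc] at hn
        have hn0 : (0:ℝ) < n := by exact_mod_cast hn.1.1
        rw [Real.rpow_neg hn0.le, ← div_eq_mul_inv, le_div_iff₀ (by positivity), one_mul]
        apply Real.rpow_le_rpow hn0.le _ (by linarith)
        exact_mod_cast hn.1.2
    _ = (X:ℝ) ^ σ * ∑ n ∈ E, (n:ℝ) ^ (-σ) := by rw [Finset.mul_sum]
    _ ≤ (X:ℝ) ^ σ * Real.exp (4 * Real.exp 40 * (J:ℝ) ^ 32) := by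
        gcongr
        refine hE1.trans ?_
        apply Real.exp_le_exp.mpr
        rw [mul_assoc]
        gcongr

lemma moebius_interval (e l : ℕ) (he : Squarefree e) :
    ∑ d ∈ e.divisors, (if l ∣ d then (ArithmeticFunction.moebius d : ℝ) else 0) =
      if l = e then (ArithmeticFunction.moebius l : ℝ) else 0 := by
  by_cases hle : l ∣ e
  swap
  · rw [if_neg (by rintro rfl; exact hle dvd_rfl)]
    apply Finset.sum_eq_zero
    intro d hd
    rw [if_neg]
    intro h
    exact hle (h.trans (Nat.dvd_of_mem_divisors hd))
  obtain ⟨f, rfl⟩ := hle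
  have hne := he.ne_zero
  have hl0 : 0 < l := Nat.pos_of_ne_zero (by rintro rfl; simp at hne)
  have hf0 : 0 < f := Nat.pos_of_ne_zero (by rintro rfl; simp at hne)
  rw [← Finset.sum_filter]
  have hset : (l * f).divisors.filter (fun d => l ∣ d) = f.divisors.image (fun x => l * x) := by
    ext d
    simp only [Finset.mem_filter, Nat.mem_divisors, Finset.mem_image]
    constructor
    · rintro ⟨⟨h1, h2⟩, c, rfl⟩
      exact ⟨c, ⟨Nat.dvd_of_mul_dvd_mul_left hl0 h1, hf0.ne'⟩, rfl⟩
    · rintro ⟨c, ⟨h1, h2⟩, rfl⟩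
      exact ⟨⟨Nat.mul_dvd_mul_left l h1, hne⟩, dvd_mul_right _ _⟩
  rw [hset, Finset.sum_image (fun a _ b _ h => Nat.eq_of_mul_eq_mul_left hl0 h)]
  have hco : Nat.Coprime l f := Nat.coprime_of_squarefree_mul he
  have : ∀ x ∈ f.divisors, (ArithmeticFunction.moebius (l * x) : ℝ) =
      ArithmeticFunction.moebius l * ArithmeticFunction.moebius x := by
    intro x hx
    have hx' := Nat.dvd_of_mem_divisors hx
    rw [ArithmeticFunction.isMultiplicative_moebius.map_mul_of_coprime (hco.coprime_dvd_right hx')]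
    push_cast; rfl
  rw [Finset.sum_congr rfl this, ← Finset.mul_sum]
  have h1 : ∑ x ∈ f.divisors, (ArithmeticFunction.moebius x : ℝ) = if f = 1 then 1 else 0 := by
    have h2 := congrArg (fun g : ArithmeticFunction ℤ => g f) ArithmeticFunction.moebius_mul_coe_zeta
    simp only [ArithmeticFunction.coe_mul_zeta_apply, ArithmeticFunction.one_apply] at h2
    exact_mod_cast h2
  rw [h1]
  by_cases hf : f = 1
  · simp [hf]
  · have : l ≠ l * f := by
      intro h
      apply hf
      have : l * 1 = l * f := by omega
      exact (Nat.eq_of_mul_eq_mul_left hl0 this).symm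
    simp [hf, this]

namespace BoundingSieve

theorem selberg_bound (s : BoundingSieve) (R : ℕ) (hR : 1 ≤ R)
    (hnu : ∀ d, d ∣ s.prodPrimes → (s.nu d)⁻¹ ≤ d)
    (hrem : ∀ d, d ∣ s.prodPrimes → |s.rem d| ≤ d) :
    s.siftedSum ≤ s.totalMass *
      (∑ l ∈ s.prodPrimes.divisors.filter (fun l => l ≤ R), s.selbergTerms l)⁻¹ + (R:ℝ) ^ 6 := by
  set D := s.prodPrimes.divisors.filter (fun l => l ≤ R) with hD
  set S := ∑ l ∈ D, s.selbergTerms l with hS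
  have hP0 : s.prodPrimes ≠ 0 := prodPrimes_ne_zero
  have hDdvd : ∀ l ∈ D, l ∣ s.prodPrimes := fun l hl =>
    Nat.dvd_of_mem_divisors (Finset.mem_filter.mp hl).1
  have hgpos : ∀ l ∈ D, 0 < s.selbergTerms l := fun l hl => selbergTerms_pos (hDdvd l hl)
  have h1D : 1 ∈ D := by simp [hD, hP0, hR]
  have hSpos : 0 < S := Finset.sum_pos hgpos ⟨1, h1D⟩
  let w : ℕ → ℝ := fun d => (ArithmeticFunction.moebius d : ℝ) * (s.nu d)⁻¹ * S⁻¹ *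
    ∑ l ∈ D, if d ∣ l then s.selbergTerms l else 0
  have hw1 : w 1 = 1 := by
    simp only [w]
    rw [s.nu_mult.map_one]
    simp only [ArithmeticFunction.moebius_apply_one, isUnit_iff_eq_one, IsUnit.dvd, one_dvd, if_true]
    rw [← hS]; push_cast; field_simp
  have hsumle : ∀ d, (∑ l ∈ D, if d ∣ l then s.selbergTerms l else 0) ≤ S := by
    intro d
    apply Finset.sum_le_sum
    intro l hl
    split_ifs
    · exact le_rfl
    · exact (hgpos l hl).le
  have hsumnn : ∀ d, 0 ≤ (∑ l ∈ D, if d ∣ l then s.selbergTerms l else 0) := by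
    intro d
    apply Finset.sum_nonneg
    intro l hl
    split_ifs
    · exact (hgpos l hl).le
    · exact le_rfl
  have hw0 : ∀ d, R < d → w d = 0 := by
    intro d hd
    simp only [w]
    rw [Finset.sum_eq_zero, mul_zero]
    intro l hl
    rw [if_neg]
    intro h
    have h1 : 0 < l := Nat.pos_of_dvd_of_pos (hDdvd l hl) (Nat.pos_of_ne_zero hP0)
    have := Nat.le_of_dvd h1 h
    have := (Finset.mem_filter.mp hl).2
    omega
  have hwb : ∀ d, d ∣ s.prodPrimes → |w d| ≤ R := by
    intro d hd
    by_cases hdR : R < d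
    · rw [hw0 d hdR]; simp
    have hnp := nu_pos_of_dvd_prodPrimes hd
    simp only [w]
    rw [abs_mul, abs_mul, abs_mul, abs_of_nonneg (hsumnn d), abs_of_pos (inv_pos.mpr hSpos),
      abs_of_pos (inv_pos.mpr hnp)]
    have hmu : |(ArithmeticFunction.moebius d : ℝ)| ≤ 1 := by
      exact_mod_cast ArithmeticFunction.abs_moebius_le_one
    calc _ ≤ 1 * (d:ℝ) * S⁻¹ * S := by
          have := hnu d hd
          have := hsumle d
          have := hsumnn d
          gcongr
      _ = d := by field_simp
      _ ≤ R := by exact_mod_cast (not_lt.mp hdR)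
  have hmain : s.mainSum (lambdaSquared w) = S⁻¹ := by
    rw [mainSum_lambdaSquared_eq_sum_mul_sum_sq]
    have hin : ∀ l ∈ s.prodPrimes.divisors,
        (∑ d ∈ s.prodPrimes.divisors, if l ∣ d then s.nu d * w d else 0) =
        if l ∈ D then S⁻¹ * (ArithmeticFunction.moebius l * s.selbergTerms l) else 0 := by
      intro l hl
      have e1 : ∀ d ∈ s.prodPrimes.divisors, (if l ∣ d then s.nu d * w d else 0) =
          ∑ e ∈ D, S⁻¹ * s.selbergTerms e * (if d ∣ e then (if l ∣ d then (ArithmeticFunction.moebius d : ℝ) else 0) else 0) := by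
        intro d hd
        have hnp := nu_pos_of_dvd_prodPrimes (Nat.dvd_of_mem_divisors hd)
        split_ifs with h
        · simp only [w]
          rw [Finset.mul_sum, Finset.mul_sum]
          apply Finset.sum_congr rfl
          intro e he
          split_ifs
          · field_simp
          · simp
        · simp
      rw [Finset.sum_congr rfl e1, Finset.sum_comm]
      have e2 : ∀ e ∈ D, ∑ d ∈ s.prodPrimes.divisors, S⁻¹ * s.selbergTerms e * (if d ∣ e then (if l ∣ d then (ArithmeticFunction.moebius d : ℝ) else 0) else 0)
          = if l = e then S⁻¹ * (ArithmeticFunction.moebius l * s.selbergTerms l) else 0 := by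
        intro e he
        rw [← Finset.mul_sum, ← Finset.sum_filter, Nat.divisors_filter_dvd_of_dvd hP0 (hDdvd e he),
          moebius_interval e l (squarefree_of_dvd_prodPrimes (hDdvd e he))]
        split_ifs with h
        · rw [h]; ring
        · simp
      rw [Finset.sum_congr rfl e2, Finset.sum_ite_eq]
    rw [Finset.sum_congr rfl (fun l hl => by rw [hin l hl])]
    have e3 : ∀ l ∈ s.prodPrimes.divisors, (s.selbergTerms l)⁻¹ * (if l ∈ D then S⁻¹ * (ArithmeticFunction.moebius l * s.selbergTerms l) else 0) ^ 2
        = if l ∈ D then S⁻¹ ^ 2 * s.selbergTerms l else 0 := by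
      intro l hl
      split_ifs with h
      · have hg := hgpos l h
        have hm : ((ArithmeticFunction.moebius l : ℝ)) ^ 2 = 1 := by
          have := ArithmeticFunction.moebius_sq_eq_one_of_squarefree (squarefree_of_dvd_prodPrimes (hDdvd l h))
          exact_mod_cast this
        rw [mul_pow, mul_pow, hm]
        field_simp
      · simp
    rw [Finset.sum_congr rfl e3, ← Finset.sum_filter, ← Finset.mul_sum]
    have : s.prodPrimes.divisors.filter (fun l => l ∈ D) = D := by
      ext l; simp only [hD, Finset.mem_filter]; tauto
    rw [this, ← hS]
    field_simp
  have herr : s.errSum (lambdaSquared w) ≤ (R:ℝ) ^ 6 := by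
    have b1 : ∀ d ∈ s.prodPrimes.divisors, |lambdaSquared w d| * |s.rem d| ≤
        ∑ d1 ∈ D, ∑ d2 ∈ D, if d = Nat.lcm d1 d2 then (R:ℝ) ^ 4 else 0 := by
      intro d hd
      have hdP := Nat.dvd_of_mem_divisors hd
      have hd0 : d ≠ 0 := by rintro rfl; exact hP0 (Nat.eq_zero_of_zero_dvd hdP)
      have c1 : |lambdaSquared w d| * |s.rem d| ≤ ∑ d1 ∈ d.divisors, ∑ d2 ∈ d.divisors,
          if d = Nat.lcm d1 d2 then |w d1| * |w d2| * d else 0 := by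
        have : |lambdaSquared w d| ≤ ∑ d1 ∈ d.divisors, ∑ d2 ∈ d.divisors,
          if d = Nat.lcm d1 d2 then |w d1| * |w d2| else 0 := by
          unfold lambdaSquared
          refine (Finset.abs_sum_le_sum_abs _ _).trans (Finset.sum_le_sum fun d1 _ => ?_)
          refine (Finset.abs_sum_le_sum_abs _ _).trans (Finset.sum_le_sum fun d2 _ => ?_)
          split_ifs
          · rw [abs_mul]
          · simp
        calc _ ≤ (∑ d1 ∈ d.divisors, ∑ d2 ∈ d.divisors,
          if d = Nat.lcm d1 d2 then |w d1| * |w d2| else 0) * d :=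
              mul_le_mul this (hrem d hdP) (abs_nonneg _) ((abs_nonneg _).trans this)
          _ = _ := by
            simp only [Finset.sum_mul, ite_mul, zero_mul]
      refine c1.trans ?_
      have c2 : ∀ d1 ∈ d.divisors, ∀ d2 ∈ d.divisors, (if d = Nat.lcm d1 d2 then |w d1| * |w d2| * d else 0)
          ≤ if d1 ∈ D then (if d2 ∈ D then (if d = Nat.lcm d1 d2 then (R:ℝ) ^ 4 else 0) else 0) else 0 := by
        intro d1 h1 d2 h2
        have h1' := (Nat.dvd_of_mem_divisors h1).trans hdP
        have h2' := (Nat.dvd_of_mem_divisors h2).trans hdP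
        by_cases hd1 : d1 ∈ D
        swap
        · have : R < d1 := by
            by_contra h
            exact hd1 (Finset.mem_filter.mpr ⟨Nat.mem_divisors.mpr ⟨h1', hP0⟩, not_lt.mp h⟩)
          simp [hd1, hw0 d1 this]
        by_cases hd2 : d2 ∈ D
        swap
        · have : R < d2 := by
            by_contra h
            exact hd2 (Finset.mem_filter.mpr ⟨Nat.mem_divisors.mpr ⟨h2', hP0⟩, not_lt.mp h⟩)
          simp [hd2, hw0 d2 this]
        rw [if_pos hd1, if_pos hd2]
        split_ifs with hlcm
        · have l1 := (Finset.mem_filter.mp hd1).2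
          have l2 := (Finset.mem_filter.mp hd2).2
          have l3 : d ≤ R * R := by
            rw [hlcm]
            have d10 : 0 < d1 := Nat.pos_of_dvd_of_pos h1' (Nat.pos_of_ne_zero hP0)
            have d20 : 0 < d2 := Nat.pos_of_dvd_of_pos h2' (Nat.pos_of_ne_zero hP0)
            exact (Nat.le_of_dvd (Nat.mul_pos d10 d20) (Nat.lcm_dvd_mul d1 d2)).trans (Nat.mul_le_mul l1 l2)
          have l4 : (d:ℝ) ≤ R * R := by exact_mod_cast l3
          calc |w d1| * |w d2| * d ≤ R * R * (R * R) := by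
                gcongr
                · exact hwb d1 h1'
                · exact hwb d2 h2'
            _ = _ := by ring
        · exact le_rfl
      refine (Finset.sum_le_sum fun d1 h1 => Finset.sum_le_sum fun d2 h2 => c2 d1 h1 d2 h2).trans ?_
      have c3 : ∀ d1, 0 ≤ ∑ d2 ∈ D, if d = Nat.lcm d1 d2 then (R:ℝ) ^ 4 else 0 := by
        intro d1
        apply Finset.sum_nonneg; intro d2 _; positivity
      calc _ ≤ ∑ d1 ∈ d.divisors, if d1 ∈ D then (∑ d2 ∈ D, if d = Nat.lcm d1 d2 then (R:ℝ) ^ 4 else 0) else 0 := by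
            apply Finset.sum_le_sum
            intro d1 _
            split_ifs with h
            · rw [← Finset.sum_filter]
              apply Finset.sum_le_sum_of_subset_of_nonneg
              · intro x hx; exact (Finset.mem_filter.mp hx).2
              · intro _ _ _; positivity
            · simp
        _ ≤ _ := by
            rw [← Finset.sum_filter]
            apply Finset.sum_le_sum_of_subset_of_nonneg
            · intro x hx; exact (Finset.mem_filter.mp hx).2
            · intro d1 _ _; exact c3 d1
    calc s.errSum (lambdaSquared w) ≤ ∑ d ∈ s.prodPrimes.divisors, ∑ d1 ∈ D, ∑ d2 ∈ D,
          if d = Nat.lcm d1 d2 then (R:ℝ) ^ 4 else 0 := Finset.sum_le_sum b1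
      _ = ∑ d1 ∈ D, ∑ d2 ∈ D, ∑ d ∈ s.prodPrimes.divisors, if d = Nat.lcm d1 d2 then (R:ℝ) ^ 4 else 0 := by
          rw [Finset.sum_comm]
          apply Finset.sum_congr rfl
          intro d1 _
          rw [Finset.sum_comm]
      _ ≤ ∑ d1 ∈ D, ∑ d2 ∈ D, (R:ℝ) ^ 4 := by
          refine Finset.sum_le_sum fun d1 _ => Finset.sum_le_sum fun d2 _ => ?_
          rw [Finset.sum_ite_eq']
          split_ifs
          · exact le_rfl
          · positivity
      _ = (D.card : ℝ) * D.card * (R:ℝ) ^ 4 := by simp; ring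
      _ ≤ (R:ℝ) * R * (R:ℝ) ^ 4 := by
          have : D.card ≤ R := by
            have : D ⊆ Finset.Icc 1 R := by
              intro x hx
              have h1 : 0 < x := Nat.pos_of_dvd_of_pos (hDdvd x hx) (Nat.pos_of_ne_zero hP0)
              exact Finset.mem_Icc.mpr ⟨h1, (Finset.mem_filter.mp hx).2⟩
            simpa using Finset.card_le_card this
          gcongr
      _ = _ := by ring
  have := siftedSum_le_mainSum_errSum_of_upperMoebius (s := s) _ (upperMoebius_lambdaSquared w hw1)
  rw [hmain] at this
  linarith

end BoundingSieve

noncomputable def fOm (i B : ℕ) : ℕ →* ℝ where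
  toFun m := if Nat.Coprime m B then (i:ℝ) ^ (ArithmeticFunction.cardFactors m) / m else 0
  map_one' := by simp
  map_mul' a b := by
    rcases Nat.eq_zero_or_pos a with rfl | ha
    · simp
    rcases Nat.eq_zero_or_pos b with rfl | hb
    · simp
    simp only [Nat.coprime_mul_iff_left]
    by_cases h1 : Nat.Coprime a B
    · by_cases h2 : Nat.Coprime b B
      · rw [if_pos ⟨h1, h2⟩, if_pos h1, if_pos h2,
          ArithmeticFunction.cardFactors_mul ha.ne' hb.ne', pow_add]
        push_cast
        field_simp
      · rw [if_neg (fun h => h2 h.2), if_neg h2, mul_zero]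
    · rw [if_neg (fun h => h1 h.1), if_neg h1, zero_mul]

theorem fOm_apply (i B m : ℕ) : fOm i B m =
    if Nat.Coprime m B then (i:ℝ) ^ (ArithmeticFunction.cardFactors m) / m else 0 := rfl

theorem fOm_nonneg (i B m : ℕ) : 0 ≤ fOm i B m := by
  rw [fOm_apply]; split_ifs <;> positivity

theorem fOm_zero (i B : ℕ) : fOm i B 0 = 0 := by
  rw [fOm_apply]; simp

theorem fOm_prime_lt (B p : ℕ) (hB : 6 ∣ B) (hp : p.Prime) : fOm 3 B p < 1 := by
  rw [fOm_apply]
  split_ifs with h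
  · rw [ArithmeticFunction.cardFactors_apply_prime hp]
    have h5 : 5 ≤ p := by
      by_contra hlt
      have h2 := hp.two_le
      have hd : p ∣ 12 := by
        have : p = 2 ∨ p = 3 ∨ p = 4 := by omega
        rcases this with h | h | h <;> subst h <;> norm_num
      have : p = 2 ∨ p = 3 := by
        have : p = 2 ∨ p = 3 ∨ p = 4 := by omega
        rcases this with h | h | h
        · exact Or.inl h
        · exact Or.inr h
        · subst h; exact absurd hp (by norm_num)
      have hp6 : p ∣ 6 := by rcases this with h | h <;> subst h <;> norm_num
      have h1 := Nat.eq_one_of_dvd_coprimes h dvd_rfl (hp6.trans hB)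
      omega
    have : (5:ℝ) ≤ p := by exact_mod_cast h5
    rw [div_lt_one (by linarith)]
    norm_num
    linarith
  · norm_num

theorem fOm_fiber (B R l : ℕ) (hB : 6 ∣ B) (hl : Squarefree l) :
    ∑ m ∈ (Icc 1 R).filter (fun m => m.primeFactors = l.primeFactors), fOm 3 B m ≤
      fOm 3 B l * ∏ p ∈ l.primeFactors, (1 - fOm 3 B p)⁻¹ := by
  have hl0 : l ≠ 0 := hl.ne_zero
  have h := (EulerProduct.summable_and_hasSum_factoredNumbers_prod_filter_prime_geometric
    (f := fOm 3 B) (fun {p} hp => by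
      rw [Real.norm_of_nonneg (fOm_nonneg _ _ _)]; exact fOm_prime_lt B p hB hp) l.primeFactors).2
  rw [show l.primeFactors.filter (fun p => p.Prime) = l.primeFactors from
    filter_true_of_mem (fun p hp => Nat.prime_of_mem_primeFactors hp)] at h
  have h' := (hasSum_subtype_iff_indicator (f := fun m => fOm 3 B m)).1 h
  set A := (Icc 1 R).filter (fun m => m.primeFactors = l.primeFactors) with hA
  have hdvd : ∀ m ∈ A, l ∣ m := by
    intro m hm
    simp only [hA, mem_filter] at hm
    rw [← Nat.prod_primeFactors_of_squarefree hl, ← hm.2]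
    exact Nat.prod_primeFactors_dvd m
  have h2 := sum_le_hasSum (A.image (fun m => m / l))
    (fun i _ => Set.indicator_nonneg (fun x _ => fOm_nonneg 3 B x) i) h'
  rw [sum_image] at h2
  · calc ∑ m ∈ A, fOm 3 B m = fOm 3 B l * ∑ m ∈ A,
        (Nat.factoredNumbers l.primeFactors).indicator (fun m => fOm 3 B m) (m / l) := by
          rw [mul_sum]
          refine sum_congr rfl fun m hm => ?_
          have hd := hdvd m hm
          rw [Set.indicator_of_mem, ← map_mul, Nat.mul_div_cancel' hd]
          apply Nat.mem_factoredNumbers_of_primeFactors_subset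
          · simp only [hA, mem_filter, mem_Icc] at hm
            exact (Nat.div_pos (Nat.le_of_dvd (by omega) hd) (Nat.pos_of_ne_zero hl0)).ne'
          · simp only [hA, mem_filter, mem_Icc] at hm
            rw [← hm.2]
            exact Nat.primeFactors_mono (Nat.div_dvd_of_dvd hd) (by omega)
      _ ≤ _ := mul_le_mul_of_nonneg_left h2 (fOm_nonneg _ _ _)
  · intro a ha b hb hab
    have h1 := hdvd a ha
    have h2 := hdvd b hb
    rw [← Nat.mul_div_cancel' h1, ← Nat.mul_div_cancel' h2]
    simp only at hab
    rw [hab]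

def sievePrimes (B R : ℕ) : Finset ℕ := (range (R+1)).filter (fun p => p.Prime ∧ ¬ p ∣ B)

theorem sieve_S_ge (B R : ℕ) (hB : 6 ∣ B) (s : BoundingSieve)
    (hs : s.prodPrimes = ∏ p ∈ sievePrimes B R, p) (hnu : ∀ m, s.nu m = fOm 3 B m) :
    ∑ m ∈ Icc 1 R, fOm 3 B m ≤
      ∑ l ∈ s.prodPrimes.divisors.filter (fun l => l ≤ R), s.selbergTerms l := by
  have h1 : ∑ m ∈ Icc 1 R, fOm 3 B m = ∑ m ∈ (Icc 1 R).filter (fun m => Nat.Coprime m B), fOm 3 B m := by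
    rw [sum_filter]
    refine sum_congr rfl fun m _ => ?_
    rw [fOm_apply]; split_ifs <;> rfl
  rw [h1]
  have hP0 : s.prodPrimes ≠ 0 := BoundingSieve.prodPrimes_ne_zero
  rw [← sum_fiberwise_of_maps_to (t := s.prodPrimes.divisors.filter (fun l => l ≤ R))
    (g := fun m => ∏ p ∈ m.primeFactors, p)]
  · refine sum_le_sum fun l hl => ?_
    rw [mem_filter, Nat.mem_divisors] at hl
    have hsq : Squarefree l := BoundingSieve.squarefree_of_dvd_prodPrimes hl.1.1
    rw [BoundingSieve.selbergTerms_apply]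
    simp only [hnu]
    refine le_trans ?_ (fOm_fiber B R l hB hsq)
    refine sum_le_sum_of_subset_of_nonneg ?_ (fun i _ _ => fOm_nonneg _ _ _)
    intro m hm
    simp only [mem_filter] at hm ⊢
    refine ⟨hm.1.1, ?_⟩
    rw [← hm.2]
    exact (Nat.primeFactors_prod (fun p hp => Nat.prime_of_mem_primeFactors hp)).symm
  · intro m hm
    simp only [mem_filter, mem_Icc] at hm
    rw [mem_filter, Nat.mem_divisors]
    refine ⟨⟨?_, hP0⟩, (Nat.le_of_dvd (by omega) (Nat.prod_primeFactors_dvd m)).trans hm.1.2⟩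
    rw [hs]
    apply prod_dvd_prod_of_subset
    intro p hp
    have hpp := Nat.prime_of_mem_primeFactors hp
    have hpd := Nat.dvd_of_mem_primeFactors hp
    simp only [sievePrimes, mem_filter, mem_range]
    refine ⟨by have := Nat.le_of_dvd (by omega) hpd; omega, hpp, fun h => ?_⟩
    exact hpp.one_lt.ne' (Nat.eq_one_of_dvd_coprimes hm.2 hpd h)

theorem sum_div_pow (i m : ℕ) (hm : m ≠ 0) :
    ∑ a ∈ m.divisors, (i:ℝ) ^ (ArithmeticFunction.cardFactors a) ≤
      ((i:ℝ)+1) ^ (ArithmeticFunction.cardFactors m) := by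
  induction m using induction_on_primes with
  | zero => exact absurd rfl hm
  | one => simp
  | prime_mul p a hp ih =>
    have ha : a ≠ 0 := by rintro rfl; simp at hm
    have ih := ih ha
    have hsub : (p * a).divisors ⊆ a.divisors ∪ a.divisors.image (fun d => p * d) := by
      intro d hd
      rw [Nat.mem_divisors] at hd
      rw [mem_union, mem_image, Nat.mem_divisors]
      by_cases hpd : p ∣ d
      · right
        obtain ⟨e, rfl⟩ := hpd
        exact ⟨e, Nat.mem_divisors.2 ⟨Nat.dvd_of_mul_dvd_mul_left hp.pos hd.1, ha⟩, rfl⟩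
      · left
        exact ⟨(((Nat.Prime.coprime_iff_not_dvd hp).2 hpd).symm).dvd_of_dvd_mul_left hd.1, ha⟩
    calc _ ≤ ∑ d ∈ a.divisors ∪ a.divisors.image (fun d => p * d),
        (i:ℝ) ^ (ArithmeticFunction.cardFactors d) :=
          sum_le_sum_of_subset_of_nonneg hsub (fun _ _ _ => by positivity)
      _ ≤ ∑ d ∈ a.divisors, (i:ℝ) ^ (ArithmeticFunction.cardFactors d) +
          ∑ d ∈ a.divisors.image (fun d => p * d), (i:ℝ) ^ (ArithmeticFunction.cardFactors d) := by
          rw [← sum_union_inter]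
          have : 0 ≤ ∑ d ∈ a.divisors ∩ a.divisors.image (fun d => p * d),
            (i:ℝ) ^ (ArithmeticFunction.cardFactors d) := sum_nonneg (fun _ _ => by positivity)
          linarith
      _ = ((i:ℝ)+1) * ∑ d ∈ a.divisors, (i:ℝ) ^ (ArithmeticFunction.cardFactors d) := by
          rw [sum_image (fun x _ y _ h => Nat.eq_of_mul_eq_mul_left hp.pos h)]
          have : ∀ x ∈ a.divisors, (i:ℝ) ^ (ArithmeticFunction.cardFactors (p * x)) =
              i * (i:ℝ) ^ (ArithmeticFunction.cardFactors x) := by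
            intro x hx
            have hx0 : x ≠ 0 := (Nat.pos_of_mem_divisors hx).ne'
            rw [ArithmeticFunction.cardFactors_mul hp.ne_zero hx0,
              ArithmeticFunction.cardFactors_apply_prime hp, pow_add, pow_one]
          rw [sum_congr rfl this, ← mul_sum]; ring
      _ ≤ ((i:ℝ)+1) * ((i:ℝ)+1) ^ (ArithmeticFunction.cardFactors a) := by gcongr
      _ = _ := by
          rw [ArithmeticFunction.cardFactors_mul hp.ne_zero ha,
              ArithmeticFunction.cardFactors_apply_prime hp, pow_add, pow_one]

theorem H_mul (i B y z : ℕ) : (∑ a ∈ Icc 1 y, fOm i B a) * (∑ b ∈ Icc 1 z, fOm 1 B b) ≤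
    ∑ m ∈ Icc 1 (y*z), fOm (i+1) B m := by
  rw [sum_mul_sum, ← sum_product']
  rw [← sum_fiberwise_of_maps_to (t := Icc 1 (y*z)) (g := fun ab : ℕ × ℕ => ab.1 * ab.2)]
  · refine sum_le_sum fun m hm => ?_
    rw [mem_Icc] at hm
    have hm0 : m ≠ 0 := by omega
    by_cases hc : Nat.Coprime m B
    · calc _ ≤ ∑ ab ∈ m.divisorsAntidiagonal, (i:ℝ) ^ (ArithmeticFunction.cardFactors ab.1) / m := by
            refine le_trans (sum_le_sum (g := fun ab : ℕ × ℕ =>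
              (i:ℝ) ^ (ArithmeticFunction.cardFactors ab.1) / m) ?_)
              (sum_le_sum_of_subset_of_nonneg ?_ (fun _ _ _ => by positivity))
            · intro ab hab
              simp only [mem_filter] at hab
              obtain ⟨_, rfl⟩ := hab
              rw [fOm_apply, fOm_apply, if_pos (hc.coprime_dvd_left (dvd_mul_right _ _)),
                if_pos (hc.coprime_dvd_left (dvd_mul_left _ _))]
              apply le_of_eq
              push_cast
              rw [one_pow]; field_simp
            · intro ab hab
              simp only [mem_filter] at hab
              rw [Nat.mem_divisorsAntidiagonal]
              exact ⟨hab.2, hm0⟩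
        _ = (∑ a ∈ m.divisors, (i:ℝ) ^ (ArithmeticFunction.cardFactors a)) / m := by
            rw [Nat.sum_divisorsAntidiagonal (fun a _ => (i:ℝ) ^ (ArithmeticFunction.cardFactors a) / m),
              sum_div]
        _ ≤ _ := by
            rw [fOm_apply, if_pos hc]
            push_cast
            gcongr
            exact sum_div_pow i m hm0
    · refine le_trans (le_of_eq (sum_eq_zero ?_)) (fOm_nonneg _ _ _)
      intro ab hab
      simp only [mem_filter] at hab
      rw [← hab.2, Nat.coprime_mul_iff_left] at hc
      rw [fOm_apply, fOm_apply]
      by_cases h1 : Nat.Coprime ab.1 B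
      · rw [if_neg (c := Nat.Coprime ab.2 B) (fun h => hc ⟨h1, h⟩)]; simp
      · rw [if_neg h1]; simp
  · intro ab hab
    simp only [mem_product, mem_Icc] at hab ⊢
    exact ⟨Nat.mul_pos hab.1.1 hab.2.1, Nat.mul_le_mul hab.1.2 hab.2.2⟩

theorem H_one (B K : ℕ) (hB : 1 ≤ B) : Real.log ((K:ℝ)+1) / B ≤ ∑ m ∈ Icc 1 (B*K), fOm 1 B m := by
  calc Real.log ((K:ℝ)+1) / B ≤ (∑ j ∈ range K, (1:ℝ)/(j+1)) / B := by
        gcongr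
        have h := log_add_one_le_harmonic K
        rw [harmonic] at h
        push_cast at h
        simpa [one_div] using h
    _ ≤ ∑ j ∈ range K, fOm 1 B (1 + B * j) := by
        rw [sum_div]
        refine sum_le_sum fun j _ => ?_
        rw [fOm_apply, if_pos (by simp)]
        rw [div_div]
        push_cast
        rw [one_pow]
        have : (1:ℝ) ≤ B := by exact_mod_cast hB
        apply one_div_le_one_div_of_le (by positivity)
        nlinarith
    _ = ∑ m ∈ (range K).image (fun j => 1 + B * j), fOm 1 B m := by
        rw [sum_image]
        intro a _ b _ h
        exact Nat.eq_of_mul_eq_mul_left hB (by simpa using h)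
    _ ≤ _ := by
        refine sum_le_sum_of_subset_of_nonneg ?_ (fun _ _ _ => fOm_nonneg _ _ _)
        intro m hm
        simp only [mem_image, mem_range, mem_Icc] at hm ⊢
        obtain ⟨j, hj, rfl⟩ := hm
        refine ⟨by omega, ?_⟩
        have : B * (j+1) ≤ B * K := Nat.mul_le_mul_left _ hj
        nlinarith

theorem H_three (B K : ℕ) (hB : 1 ≤ B) :
    (Real.log ((K:ℝ)+1) / B) ^ 3 ≤ ∑ m ∈ Icc 1 ((B*K)^3), fOm 3 B m := by
  have h1 := H_one B K hB
  have h0 : 0 ≤ Real.log ((K:ℝ)+1) / B := by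
    have : 0 ≤ Real.log ((K:ℝ)+1) := Real.log_nonneg (by linarith [Nat.cast_nonneg (α := ℝ) K])
    positivity
  have h2 := H_mul 1 B (B*K) (B*K)
  have h3 := H_mul 2 B (B*K*(B*K)) (B*K)
  rw [show (B*K)^3 = B*K*(B*K)*(B*K) by ring]
  refine le_trans ?_ h3
  have h4 : (0:ℝ) ≤ ∑ m ∈ Icc 1 (B*K), fOm 1 B m := h0.trans h1
  calc (Real.log ((K:ℝ)+1) / B) ^ 3 ≤ (∑ m ∈ Icc 1 (B*K), fOm 1 B m)^3 := by gcongr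
    _ = ((∑ m ∈ Icc 1 (B*K), fOm 1 B m) * (∑ m ∈ Icc 1 (B*K), fOm 1 B m)) * (∑ m ∈ Icc 1 (B*K), fOm 1 B m) := by ring
    _ ≤ _ := mul_le_mul_of_nonneg_right h2 h4

def cubF {R : Type*} [CommRing R] (c : ℕ) (x : R) : R := (x+1)*((c:R)*x+1)*(2*(c:R)*x+(c:R)+1)

def cubN (c x : ℕ) : ℕ := (x+1)*(c*x+1)*(2*c*x+c+1)

theorem cubF_cast (c d r : ℕ) : ((cubN c r : ℕ) : ZMod d) = cubF c ((r:ℕ) : ZMod d) := by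
  simp [cubN, cubF]

theorem cubF_map {R S : Type*} [CommRing R] [CommRing S] (f : R →+* S) (c : ℕ) (x : R) :
    f (cubF c x) = cubF c (f x) := by
  have h2 : f 2 = 2 := map_ofNat f 2
  simp [cubF, h2]

noncomputable def rootN (c d : ℕ) : ℕ := Nat.card {x : ZMod d // cubF c x = 0}

theorem rootN_mul (c a b : ℕ) (h : Nat.Coprime a b) : rootN c (a*b) = rootN c a * rootN c b := by
  unfold rootN
  rw [← Nat.card_prod]
  refine Nat.card_congr ?_
  refine (Equiv.subtypeEquiv (q := fun y : ZMod a × ZMod b => cubF c y.1 = 0 ∧ cubF c y.2 = 0)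
    (ZMod.chineseRemainder h).toEquiv ?_).trans
    (Equiv.subtypeProdEquivProd (p := fun x : ZMod a => cubF c x = 0)
      (q := fun x : ZMod b => cubF c x = 0))
  intro x
  have h1 := cubF_map (ZMod.chineseRemainder h).toRingHom c x
  have h2 := cubF_map (RingHom.fst (ZMod a) (ZMod b)) c ((ZMod.chineseRemainder h).toRingHom x)
  have h3 := cubF_map (RingHom.snd (ZMod a) (ZMod b)) c ((ZMod.chineseRemainder h).toRingHom x)
  rw [← h1] at h2 h3
  constructor
  · intro hx
    rw [hx, map_zero] at h2 h3
    exact ⟨by simpa using h2.symm, by simpa using h3.symm⟩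
  · rintro ⟨h4, h5⟩
    apply (ZMod.chineseRemainder h).injective
    rw [map_zero]
    refine Prod.ext ?_ ?_
    · exact h2.trans h4
    · exact h3.trans h5

theorem rootN_prime (c p : ℕ) (hp : p.Prime) (h2 : ¬ p ∣ 2) (hc : ¬ p ∣ c) (hc1 : ¬ p ∣ c - 1)
    (h1 : 1 ≤ c) : rootN c p = 3 := by
  have : Fact p.Prime := ⟨hp⟩
  have e2 : (2 : ZMod p) ≠ 0 := by
    intro h
    exact h2 ((ZMod.natCast_eq_zero_iff 2 p).1 (by exact_mod_cast h))
  have ec : (c : ZMod p) ≠ 0 := by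
    intro h
    exact hc ((ZMod.natCast_eq_zero_iff c p).1 h)
  have ec1 : (c : ZMod p) - 1 ≠ 0 := by
    intro h
    apply hc1
    rw [← ZMod.natCast_eq_zero_iff]
    push_cast [h1]
    exact h
  unfold rootN
  have : ∀ x : ZMod p, cubF c x = 0 ↔ x ∈ ({-1, -1/(c:ZMod p), -((c:ZMod p)+1)/(2*c)} : Finset (ZMod p)) := by
    intro x
    simp only [cubF, mul_eq_zero, mem_insert, mem_singleton]
    rw [or_assoc]
    refine or_congr ?_ (or_congr ?_ ?_)
    · exact add_eq_zero_iff_eq_neg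
    · rw [eq_div_iff ec]
      constructor <;> intro h <;> linear_combination h
    · rw [eq_div_iff (mul_ne_zero e2 ec)]
      constructor <;> intro h <;> linear_combination h
  rw [Nat.card_congr (Equiv.subtypeEquivRight this)]
  rw [Nat.card_eq_fintype_card, Fintype.card_coe]
  rw [card_eq_three]
  refine ⟨_, _, _, ?_, ?_, ?_, rfl⟩
  · intro h
    rw [eq_div_iff ec] at h
    apply ec1; linear_combination -h
  · intro h
    rw [eq_div_iff (mul_ne_zero e2 ec)] at h
    apply ec1; linear_combination -h
  · intro h
    rw [div_eq_div_iff ec (mul_ne_zero e2 ec)] at h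
    apply ec1
    have : (c:ZMod p) * ((c:ZMod p) - 1) = 0 := by linear_combination h
    exact (mul_eq_zero.1 this).resolve_left ec

theorem rootN_eq (n d : ℕ) (hn : 1 ≤ n) (hd : Squarefree d) (hco : Nat.Coprime d (6*(4^n-1))) :
    rootN (4^n) d = 3 ^ (ArithmeticFunction.cardFactors d) := by
  induction d using induction_on_primes with
  | zero => simp at hd
  | one =>
    unfold rootN
    simp only [ArithmeticFunction.cardFactors_one, pow_zero]
    have : Unique {x : ZMod 1 // cubF (4^n) x = 0} := ⟨⟨⟨0, Subsingleton.elim _ _⟩⟩, fun a => Subtype.ext (Subsingleton.elim _ _)⟩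
    exact Nat.card_unique
  | prime_mul p a hp ih =>
    have hpa : Nat.Coprime p a := Nat.coprime_of_squarefree_mul hd
    have ha0 : a ≠ 0 := by rintro rfl; simp at hd
    rw [Nat.coprime_mul_iff_left] at hco
    have hnd := (Nat.Prime.coprime_iff_not_dvd hp).1 hco.1
    have h2 : ¬ p ∣ 2 := fun h => hnd (Dvd.dvd.mul_right (h.trans (by norm_num)) _)
    rw [rootN_mul _ _ _ hpa, ih (hd.of_mul_right) hco.2,
      rootN_prime (4^n) p hp h2 _ (fun h => hnd (Dvd.dvd.mul_left h _)) (Nat.one_le_pow _ _ (by norm_num)),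
      ArithmeticFunction.cardFactors_mul hp.ne_zero ha0,
      ArithmeticFunction.cardFactors_apply_prime hp, pow_add, pow_one]
    intro h
    have := hp.dvd_of_dvd_pow h
    apply h2
    exact hp.dvd_of_dvd_pow (m := 2) (n := 2) (by simpa using this)

theorem count_class (d N : ℕ) (hd : 1 ≤ d) (x : ZMod d) :
    |((((range N).filter (fun r : ℕ => (r : ZMod d) = x)).card : ℕ) : ℝ) - (N:ℝ)/d| ≤ 1 := by
  have : NeZero d := ⟨by omega⟩
  have h : (range N).filter (fun r : ℕ => (r : ZMod d) = x) = (range N).filter (fun r => r ≡ x.val [MOD d]) := by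
    ext r
    simp only [mem_filter, and_congr_right_iff]
    intro _
    rw [← ZMod.natCast_eq_natCast_iff]
    simp
  rw [h, ← Nat.count_eq_card_filter_range, Nat.count_modEq_card _ hd]
  have h1 : ((N / d : ℕ) : ℝ) ≤ (N:ℝ)/d := Nat.cast_div_le
  have h2 : (N:ℝ)/d < ((N / d : ℕ) : ℝ) + 1 := by
    rw [div_lt_iff₀ (by exact_mod_cast hd)]
    exact_mod_cast Nat.lt_mul_of_div_lt (Nat.lt_succ_self _) hd
  rw [abs_le]
  split_ifs <;> push_cast <;> constructor <;> linarith

theorem count_dvd (c d N : ℕ) (hd : 1 ≤ d) :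
    |((((range N).filter (fun r => d ∣ cubN c r)).card : ℕ) : ℝ) - rootN c d * ((N:ℝ)/d)| ≤ rootN c d := by
  have : NeZero d := ⟨by omega⟩
  classical
  set A : Finset (ZMod d) := univ.filter (fun x => cubF c x = 0) with hA
  have hcard : rootN c d = A.card := by
    unfold rootN
    rw [Nat.card_eq_fintype_card, Fintype.card_subtype]
  have h1 : ((range N).filter (fun r => d ∣ cubN c r)).card =
      ∑ x ∈ A, ((range N).filter (fun r : ℕ => (r : ZMod d) = x)).card := by
    rw [card_eq_sum_card_fiberwise (f := fun r : ℕ => (r : ZMod d)) (t := A)]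
    · refine sum_congr rfl fun x hx => ?_
      congr 1
      ext r
      simp only [hA, mem_filter, mem_univ, true_and] at hx ⊢
      constructor
      · rintro ⟨⟨h, _⟩, h'⟩; exact ⟨h, h'⟩
      · rintro ⟨h, rfl⟩
        refine ⟨⟨h, ?_⟩, rfl⟩
        rw [← ZMod.natCast_eq_zero_iff, cubF_cast, hx]
    · intro r hr
      simp only [coe_filter, mem_range, Set.mem_ofPred_eq, hA, mem_univ, true_and] at hr ⊢
      rw [← cubF_cast, ZMod.natCast_eq_zero_iff]; exact hr.2
  rw [h1, hcard]
  push_cast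
  rw [← nsmul_eq_mul, ← sum_const, ← sum_sub_distrib]
  refine (abs_sum_le_sum_abs _ _).trans ?_
  refine (sum_le_sum (fun x _ => count_class d N hd x)).trans ?_
  simp

theorem cubN_inj (c : ℕ) : StrictMono (cubN c) := by
  intro a b h
  unfold cubN
  have h1 : c * a ≤ c * b := Nat.mul_le_mul_left _ h.le
  calc (a+1)*(c*a+1)*(2*c*a+c+1) < (b+1)*(c*a+1)*(2*c*a+c+1) := by
        have : 0 < (c*a+1)*(2*c*a+c+1) := by positivity
        rw [mul_assoc (a+1), mul_assoc (b+1)]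
        exact Nat.mul_lt_mul_of_pos_right (by omega) this
    _ ≤ (b+1)*(c*b+1)*(2*c*b+c+1) := by
        have : 2*c*a ≤ 2*c*b := Nat.mul_le_mul_left _ h.le
        gcongr

noncomputable def theSieve (n R N : ℕ) : BoundingSieve where
  support := (range N).image (cubN (4^n))
  prodPrimes := ∏ p ∈ sievePrimes (6*(4^n-1)) R, p
  prodPrimes_squarefree := by
    refine Finset.squarefree_prod_of_pairwise_isCoprime ?_ ?_
    · intro a ha b hb hab
      simp only [sievePrimes, coe_filter, mem_range, Set.mem_ofPred_eq] at ha hb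
      exact Nat.coprime_iff_isRelPrime.1 ((Nat.coprime_primes ha.2.1 hb.2.1).2 hab)
    · intro a ha
      simp only [sievePrimes, mem_filter] at ha
      exact ha.2.1.prime.squarefree
  weights := fun _ => 1
  weights_nonneg := fun _ => zero_le_one
  totalMass := N
  nu := ⟨fOm 3 (6*(4^n-1)), fOm_zero _ _⟩
  nu_mult := ⟨by simp, fun _ => by simp⟩
  nu_pos_of_prime := by
    intro p hp hd
    obtain ⟨q, hq, hpq⟩ := (Prime.dvd_finsetProd_iff hp.prime _).1 hd
    simp only [sievePrimes, mem_filter] at hq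
    obtain rfl := (Nat.prime_dvd_prime_iff_eq hp hq.2.1).1 hpq
    show 0 < fOm 3 (6*(4^n-1)) p
    rw [fOm_apply, if_pos ((Nat.Prime.coprime_iff_not_dvd hp).2 hq.2.2)]
    have := hp.pos
    positivity
  nu_lt_one_of_prime := by
    intro p hp _
    exact fOm_prime_lt _ p (dvd_mul_right _ _) hp

theorem sieve_count (n N K : ℕ) (hn : 1 ≤ n) (hK : 1 ≤ K) :
    (((range N).filter (fun r => (r+1).Prime ∧ (4^n*r+1).Prime ∧ (2*4^n*r+4^n+1).Prime)).card : ℝ) ≤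
      N * (((6*(4^n-1):ℕ):ℝ) / Real.log ((K:ℝ)+1))^3 + (((6*(4^n-1)*K)^3:ℕ):ℝ)^6 +
        (((6*(4^n-1)*K)^3:ℕ):ℝ) := by
  set B := 6*(4^n-1) with hB
  have h4 : 4 ≤ 4^n := by
    calc 4 = 4^1 := by norm_num
      _ ≤ 4^n := Nat.pow_le_pow_right (by norm_num) hn
  have hB1 : 1 ≤ B := by omega
  set R := (B*K)^3 with hR
  have hR1 : 1 ≤ R := Nat.one_le_pow _ _ (Nat.mul_pos hB1 hK)
  set s := theSieve n R N with hs
  have hprod : s.prodPrimes = ∏ p ∈ sievePrimes B R, p := rfl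
  have hnu : ∀ m, s.nu m = fOm 3 B m := fun _ => rfl
  have hcop : ∀ d, d ∣ s.prodPrimes → Nat.Coprime d B := by
    intro d hd
    refine Nat.Coprime.coprime_dvd_left hd ?_
    rw [hprod]
    refine Nat.Coprime.prod_left fun p hp => ?_
    simp only [sievePrimes, mem_filter] at hp
    exact (Nat.Prime.coprime_iff_not_dvd hp.2.1).2 hp.2.2
  have hpos : ∀ d, d ∣ s.prodPrimes → 0 < d := fun d hd =>
    Nat.pos_of_dvd_of_pos hd (Nat.pos_of_ne_zero BoundingSieve.prodPrimes_ne_zero)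
  have hmain := BoundingSieve.selberg_bound s R hR1 ?_ ?_
  · have hS := sieve_S_ge B R (dvd_mul_right _ _) s hprod hnu
    have hH := H_three B K hB1
    have hlog : 0 < Real.log ((K:ℝ)+1) := Real.log_pos (by
      have : (1:ℝ) ≤ K := by exact_mod_cast hK
      linarith)
    have hBr : (0:ℝ) < B := by exact_mod_cast hB1
    have hH2 := hH.trans hS
    have hinv : (∑ l ∈ s.prodPrimes.divisors.filter (fun l => l ≤ R), s.selbergTerms l)⁻¹ ≤
        ((B:ℝ) / Real.log ((K:ℝ)+1))^3 := by
      rw [show ((B:ℝ) / Real.log ((K:ℝ)+1))^3 = ((Real.log ((K:ℝ)+1) / B)^3)⁻¹ by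
        rw [← inv_pow, inv_div]]
      exact inv_anti₀ (by positivity) hH2
    have htm : s.totalMass = N := rfl
    rw [htm] at hmain
    have h5 : s.siftedSum ≤ N * ((B:ℝ) / Real.log ((K:ℝ)+1))^3 + (R:ℝ)^6 := by
      refine hmain.trans ?_
      gcongr
    have hsift : s.siftedSum = (((range N).filter
        (fun r => Nat.Coprime s.prodPrimes (cubN (4^n) r))).card : ℝ) := by
      rw [BoundingSieve.siftedSum]
      show ∑ d ∈ (range N).image (cubN (4^n)), (if Nat.Coprime s.prodPrimes d then (1:ℝ) else 0) = _
      rw [sum_image (fun a _ b _ h => (cubN_inj _).injective h), ← sum_filter]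
      simp
    rw [hsift] at h5
    have hsub : (range N).filter (fun r => (r+1).Prime ∧ (4^n*r+1).Prime ∧ (2*4^n*r+4^n+1).Prime) ⊆
        (range N).filter (fun r => Nat.Coprime s.prodPrimes (cubN (4^n) r)) ∪ range R := by
      intro r hr
      simp only [mem_filter, mem_union, mem_range] at hr ⊢
      by_cases hrR : r < R
      · exact Or.inr hrR
      left
      refine ⟨hr.1, ?_⟩
      rw [hprod]
      refine Nat.Coprime.prod_left fun p hp => ?_
      simp only [sievePrimes, mem_filter, mem_range] at hp
      have hle : ∀ q, r + 1 ≤ q → q.Prime → Nat.Coprime p q := by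
        intro q hq hqp
        exact (Nat.coprime_primes hp.2.1 hqp).2 (by omega)
      have hcr : r ≤ 4^n*r := Nat.le_mul_of_pos_left r (by omega)
      have hcr2 : 2*4^n*r = 2*(4^n*r) := by ring
      unfold cubN
      exact ((hle _ le_rfl hr.2.1).mul_right (hle _ (by omega) hr.2.2.1)).mul_right
        (hle _ (by omega) hr.2.2.2)
    have hc := (card_le_card hsub).trans (card_union_le _ _)
    rw [card_range] at hc
    have hc' : (((range N).filter (fun r => (r+1).Prime ∧ (4^n*r+1).Prime ∧
        (2*4^n*r+4^n+1).Prime)).card : ℝ) ≤ (((range N).filter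
        (fun r => Nat.Coprime s.prodPrimes (cubN (4^n) r))).card : ℝ) + R := by
      exact_mod_cast hc
    linarith
  · intro d hd
    rw [hnu, fOm_apply, if_pos (hcop d hd), inv_div]
    have : (1:ℝ) ≤ ((3:ℕ):ℝ) ^ (ArithmeticFunction.cardFactors d) := one_le_pow₀ (by norm_num)
    exact div_le_self (Nat.cast_nonneg _) this
  · intro d hd
    have hsq := BoundingSieve.squarefree_of_dvd_prodPrimes hd
    have hr := rootN_eq n d hn hsq (hcop d hd)
    have hcd := count_dvd (4^n) d N (hpos d hd)
    have hms : s.multSum d = (((range N).filter (fun r => d ∣ cubN (4^n) r)).card : ℝ) := by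
      rw [BoundingSieve.multSum]
      show ∑ m ∈ (range N).image (cubN (4^n)), (if d ∣ m then (1:ℝ) else 0) = _
      rw [sum_image (fun a _ b _ h => (cubN_inj _).injective h), ← sum_filter]
      simp
    rw [BoundingSieve.rem, hms, hnu, fOm_apply, if_pos (hcop d hd)]
    have htm : s.totalMass = N := rfl
    rw [htm]
    have hle : rootN (4^n) d ≤ d := by
      have : NeZero d := ⟨(hpos d hd).ne'⟩
      unfold rootN
      calc _ ≤ Nat.card (ZMod d) := Finite.card_subtype_le _
        _ = d := Nat.card_zmod d
    have hle' : (rootN (4^n) d : ℝ) ≤ d := by exact_mod_cast hle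
    refine le_trans (le_of_eq ?_) (hcd.trans hle')
    rw [hr]
    push_cast
    congr 1
    ring

open Classical in
theorem combine (n ℓ : ℕ) (hn : 1 ≤ n) (hℓ : ℓ = 4 ^ n - 1) : ∃ K0 : ℝ, 0 < K0 ∧
    ∀ (X J K : ℕ) (T : ℝ), 2 ≤ J → 1 ≤ K → 1 ≤ T → T ≤ 2^J → 1 ≤ X → ℓ ≤ X →
    (((Icc 1 X).filter (fun p => p.Prime ∧ ℓ < p ∧
      Nat.totient (p - ℓ) = Nat.totient (p + ℓ))).card : ℝ) ≤
    (X:ℝ) ^ (1 - 1 / (J:ℝ)) * Real.exp (K0 * (J:ℝ) ^ 32) + 8 * X / 2^J +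
    3 * X * T / 2^J * (1 + Real.log (2 * X : ℕ)) ^ 2 +
    8 * X / T * (1 + Real.log (2 * X : ℕ)) ^ 2 * Real.log (4 * X : ℕ) +
    (X * (((6*(4^n-1):ℕ):ℝ) / Real.log ((K:ℝ)+1))^3 + (((6*(4^n-1)*K)^3:ℕ):ℝ)^6 +
        (((6*(4^n-1)*K)^3:ℕ):ℝ)) := by
  obtain ⟨K0, hK0, hsm⟩ := smooth_count
  refine ⟨K0, hK0, ?_⟩
  intro X J K T hJ hK hT hTQ hX hlX
  have hQ2 : 2 ≤ 2^J := by
    calc 2 = 2^1 := by norm_num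
      _ ≤ 2^J := Nat.pow_le_pow_right (by norm_num) (by omega)
  have b1 := hsm J X hJ hX
  have b2 := sqcase X (2^J) ℓ (by omega) hlX
  have b3 := case1 X (2^J) ℓ T (by omega) hT hlX
  have b4 := case2 X (2^J) ℓ T hT (by push_cast; exact hTQ) hlX
  have b5 := sieve_count n X K hn hK
  set S1 := (Finset.Icc 1 X).filter (fun n => ∀ r, r.Prime → r ∣ n → ∀ q, q.Prime → q ∣ r - 1 → q ≤ 2 ^ J) with hS1
  set S2 := (Finset.Icc 1 X).filter (fun p => ℓ < p ∧ ∃ r, 2^J < r ∧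
      (r ^ 2 ∣ p - ℓ ∨ r ^ 2 ∣ p + ℓ)) with hS2
  set S3 := (Finset.Icc 1 X).filter (fun p => ℓ < p ∧ ∃ q a b, 2^J < q ∧ 1 ≤ a ∧ 1 ≤ b ∧
      (1 + q * a) ∣ p - ℓ ∧ (1 + q * b) ∣ p + ℓ ∧ Nat.Coprime (1 + q * a) (1 + q * b) ∧
      (((1 + q * a) * (1 + q * b) : ℕ) : ℝ) ≤ X * T) with hS3
  set S4 := (Finset.Icc 1 X).filter (fun p => ℓ < p ∧ ∃ q m m' a b, q.Prime ∧ 2^J < q ∧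
      p - ℓ = m * (1 + q * a) ∧ p + ℓ = m' * (1 + q * b) ∧ Nat.gcd m m' ∣ 2 ∧ m' ≠ m + 2 * ℓ ∧
      X * T < (((1 + q * a) * (1 + q * b) : ℕ) : ℝ)) with hS4
  set S5 := (range X).filter (fun r => (r+1).Prime ∧ (4^n*r+1).Prime ∧ (2*4^n*r+4^n+1).Prime) with hS5
  have hsub : (Icc 1 X).filter (fun p => p.Prime ∧ ℓ < p ∧
      Nat.totient (p - ℓ) = Nat.totient (p + ℓ)) ⊆
      S1.image (fun m => m + ℓ) ∪ (S2 ∪ (S3 ∪ (S4 ∪ S5.image (fun r => 2*4^n*r+4^n+1)))) := by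
    intro p hp
    rw [mem_filter] at hp
    obtain ⟨hpX, hpp, hlp, htot⟩ := hp
    have hpX' := mem_Icc.1 hpX
    simp only [mem_union]
    rcases structural n ℓ (2^J) p (X*T) hn hℓ hQ2 hpp hlp htot with h | h | h | h | h
    · left
      rw [mem_image]
      refine ⟨p - ℓ, ?_, by omega⟩
      rw [hS1, mem_filter, mem_Icc]
      exact ⟨⟨by omega, by omega⟩, h⟩
    · right; left
      rw [hS2, mem_filter]; exact ⟨hpX, hlp, h⟩
    · right; right; left
      rw [hS3, mem_filter]; exact ⟨hpX, hlp, h⟩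
    · right; right; right; left
      rw [hS4, mem_filter]; exact ⟨hpX, hlp, h⟩
    · right; right; right; right
      obtain ⟨r, hr1, h1, h2, h3⟩ := h
      rw [mem_image]
      refine ⟨r, ?_, h3.symm⟩
      rw [hS5, mem_filter, mem_range]
      refine ⟨?_, h1, h2, h3 ▸ hpp⟩
      have : r ≤ 4^n*r := Nat.le_mul_of_pos_left r (by positivity)
      have e : 2*4^n*r = 2*(4^n*r) := by ring
      have hX2 := hpX'.2
      have hpos : 0 < 4^n := by positivity
      generalize 4^n*r = w at *
      generalize 4^n = c at *
      omega
  have hc := (card_le_card hsub).trans (card_union_le _ _)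
  have hc2 := card_union_le S2 (S3 ∪ (S4 ∪ S5.image (fun r => 2*4^n*r+4^n+1)))
  have hc3 := card_union_le S3 (S4 ∪ S5.image (fun r => 2*4^n*r+4^n+1))
  have hc4 := card_union_le S4 (S5.image (fun r => 2*4^n*r+4^n+1))
  have hc5 : (S5.image (fun r => 2*4^n*r+4^n+1)).card ≤ S5.card := card_image_le
  have hc1 : (S1.image (fun m => m + ℓ)).card ≤ S1.card := card_image_le
  have hfin : ((Icc 1 X).filter (fun p => p.Prime ∧ ℓ < p ∧
      Nat.totient (p - ℓ) = Nat.totient (p + ℓ))).card ≤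
      S1.card + S2.card + S3.card + S4.card + S5.card := by omega
  have hfin' : (((Icc 1 X).filter (fun p => p.Prime ∧ ℓ < p ∧
      Nat.totient (p - ℓ) = Nat.totient (p + ℓ))).card : ℝ) ≤
      S1.card + S2.card + S3.card + S4.card + S5.card := by exact_mod_cast hfin
  push_cast at b2 b3 b4 b5 ⊢
  linarith

theorem evt (K0 : ℝ) : ∀ᶠ X : ℕ in Filter.atTop, 3 ≤ Real.log X ∧ 1 ≤ Real.log (Real.log X) ∧
    Real.log X ^ 3 ≤ Real.exp (Real.log X / 2) ∧
    K0 * (17 * Real.log (Real.log X))^33 + 51 * Real.log (Real.log X)^2 ≤ Real.log X := by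
  have t1 : Filter.Tendsto (fun X : ℕ => Real.log X) Filter.atTop Filter.atTop :=
    Real.tendsto_log_atTop.comp tendsto_natCast_atTop_atTop
  have t2 := Real.tendsto_log_atTop.comp t1
  have a1 : ∀ᶠ L : ℝ in Filter.atTop, L^3 ≤ Real.exp (L/2) := by
    have h := (isLittleO_pow_exp_pos_mul_atTop 3 (b := 1/2) (by norm_num)).bound (c := 1) (by norm_num)
    filter_upwards [h, Filter.eventually_ge_atTop 0] with L hL h0
    rw [Real.norm_of_nonneg (by positivity), Real.norm_of_nonneg (by positivity), one_mul] at hL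
    rwa [show L/2 = 1/2*L by ring]
  have a2 : ∀ᶠ u : ℝ in Filter.atTop, K0 * (17*u)^33 + 51*u^2 ≤ Real.exp u := by
    have h1 := ((isLittleO_pow_exp_pos_mul_atTop 33 (b := 1) (by norm_num)).const_mul_left (K0 * 17^33))
    have h2 := ((isLittleO_pow_exp_pos_mul_atTop 2 (b := 1) (by norm_num)).const_mul_left 51)
    have h := (h1.add h2).bound (c := 1) (by norm_num)
    filter_upwards [h] with u hu
    rw [Real.norm_of_nonneg (Real.exp_pos _).le, one_mul, one_mul] at hu
    have := (le_abs_self _).trans hu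
    rw [mul_pow]; linarith
  filter_upwards [t1.eventually_ge_atTop 3, t2.eventually_ge_atTop 1, t1.eventually a1,
    t2.eventually a2] with X h1 h2 h3 h4
  refine ⟨h1, h2, h3, ?_⟩
  simp only [Function.comp] at h4
  rwa [Real.exp_log (by linarith)] at h4

open Classical in
theorem nat_bound (n ℓ : ℕ) (hn : 1 ≤ n) (hℓ : ℓ = 4 ^ n - 1) : ∃ C : ℝ, 0 < C ∧
    ∀ᶠ X : ℕ in Filter.atTop, (((Icc 1 X).filter (fun p => p.Prime ∧ ℓ < p ∧
      Nat.totient (p - ℓ) = Nat.totient (p + ℓ))).card : ℝ) ≤ C * (X / Real.log X ^ 3) := by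
  obtain ⟨K0, hK0, hcomb⟩ := combine n ℓ hn hℓ
  set B := 6*(4^n-1) with hB
  refine ⟨1 + 8 + 27 + 216 + ((40*(B:ℝ))^3 + 2 * (B:ℝ)^18), by positivity, ?_⟩
  filter_upwards [evt K0, Filter.eventually_ge_atTop (ℓ+1)] with X hX hlX
  obtain ⟨hL3, hu, hexp, hbig⟩ := hX
  have hX1 : (1:ℝ) ≤ X := by
    have : 1 ≤ X := by omega
    exact_mod_cast this
  have hX0 : (0:ℝ) < X := by linarith
  set L := Real.log X with hL
  set u := Real.log L with hudef
  have hL0 : 0 < L := by linarith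
  have hXexp : (X:ℝ) = Real.exp L := (Real.exp_log hX0).symm
  set J := ⌈16*u⌉₊ with hJ
  have hJge : 16*u ≤ J := Nat.le_ceil _
  have hJle : (J:ℝ) ≤ 17*u := by
    have := Nat.ceil_lt_add_one (a := 16*u) (by linarith)
    linarith
  have hJ16 : (16:ℝ) ≤ J := by linarith
  have hJ2 : 2 ≤ J := by
    have : 16 ≤ J := by exact_mod_cast hJ16
    omega
  have hQ : L^11 ≤ (2:ℝ)^J := by
    have e1 : L^11 = Real.exp (11*u) := by
      rw [show (11:ℝ)*u = ((11:ℕ):ℝ)*u by norm_num, Real.exp_nat_mul, hudef, Real.exp_log hL0]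
    have e2 : (2:ℝ)^J = Real.exp (J * Real.log 2) := by
      rw [Real.exp_nat_mul, Real.exp_log (by norm_num)]
    rw [e1, e2, Real.exp_le_exp]
    have := Real.log_two_gt_d9
    nlinarith
  set K := ⌊Real.exp (L/40)⌋₊ with hK
  have hK1 : 1 ≤ K := by
    rw [hK, Nat.one_le_floor_iff]
    exact Real.one_le_exp (by positivity)
  have hKle : (K:ℝ) ≤ Real.exp (L/40) := Nat.floor_le (Real.exp_pos _).le
  have hKlog : L/40 ≤ Real.log ((K:ℝ)+1) := by
    rw [Real.le_log_iff_exp_le (by positivity)]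
    exact (Nat.lt_floor_add_one _).le
  have hT1 : (1:ℝ) ≤ L^6 := one_le_pow₀ (by linarith)
  have hTQ : L^6 ≤ (2:ℝ)^J := (pow_le_pow_right₀ (by linarith) (by norm_num)).trans hQ
  have hmain := hcomb X J K (L^6) hJ2 hK1 hT1 hTQ (by omega) (by omega)
  have hlog2 : Real.log 2 ≤ 1 := by linarith [Real.log_two_lt_d9]
  have hl2X : 1 + Real.log (2*X:ℕ) ≤ 3*L := by
    push_cast
    rw [Real.log_mul (by norm_num) hX0.ne']
    linarith
  have hl2X0 : 0 ≤ 1 + Real.log (2*X:ℕ) := by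
    have : 0 ≤ Real.log (2*X:ℕ) := Real.log_natCast_nonneg _
    linarith
  have hl4X0 : 0 ≤ Real.log (4*X:ℕ) := Real.log_natCast_nonneg _
  have hl4X : Real.log (4*X:ℕ) ≤ 3*L := by
    push_cast
    rw [Real.log_mul (by norm_num) hX0.ne', show (4:ℝ) = 2^2 by norm_num, Real.log_pow]
    push_cast
    linarith
  -- term 1
  have T1 : (X:ℝ) ^ (1 - 1 / (J:ℝ)) * Real.exp (K0 * (J:ℝ) ^ 32) ≤ X / L^3 := by
    have e1 : (X:ℝ) ^ (1 - 1 / (J:ℝ)) = Real.exp (L * (1 - 1/(J:ℝ))) := by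
      rw [Real.rpow_def_of_pos hX0]
    have e2 : X / L^3 = Real.exp (L - 3*u) := by
      rw [Real.exp_sub, ← hXexp, show (3:ℝ)*u = ((3:ℕ):ℝ)*u by norm_num, Real.exp_nat_mul,
        hudef, Real.exp_log hL0]
    rw [e1, e2, ← Real.exp_add, Real.exp_le_exp]
    have hJ0 : (0:ℝ) < J := by linarith
    have h1 : K0 * (J:ℝ)^33 + 3*u*J ≤ L := by
      have a : (J:ℝ)^33 ≤ (17*u)^33 := by gcongr
      have b : K0 * (J:ℝ)^33 ≤ K0 * (17*u)^33 := by gcongr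
      have c : 3*u*J ≤ 51*u^2 := by nlinarith
      linarith
    have h2 : K0 * (J:ℝ)^32 + 3*u ≤ L / J := by
      rw [le_div_iff₀ hJ0]
      calc _ = K0 * (J:ℝ)^33 + 3*u*J := by ring
        _ ≤ L := h1
    have h3 : L * (1 - 1/(J:ℝ)) = L - L/J := by ring
    rw [h3]; linarith
  have T2 : 8 * X / (2:ℝ)^J ≤ 8 * (X / L^3) := by
    have : L^3 ≤ (2:ℝ)^J := (pow_le_pow_right₀ (by linarith) (by norm_num)).trans hQ
    rw [mul_div_assoc]
    gcongr
  have T3 : 3 * X * L^6 / (2:ℝ)^J * (1 + Real.log (2 * X : ℕ)) ^ 2 ≤ 27 * (X / L^3) := by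
    calc _ ≤ 3 * X * L^6 / L^11 * (3*L)^2 := by gcongr
      _ = _ := by field_simp; ring
  have T4 : 8 * X / L^6 * (1 + Real.log (2 * X : ℕ)) ^ 2 * Real.log (4 * X : ℕ) ≤ 216 * (X / L^3) := by
    calc _ ≤ 8 * X / L^6 * (3*L)^2 * (3*L) := by gcongr
      _ = _ := by field_simp; ring
  have T5 : X * ((B:ℝ) / Real.log ((K:ℝ)+1))^3 ≤ (40*(B:ℝ))^3 * (X / L^3) := by
    have h0 : 0 ≤ Real.log ((K:ℝ)+1) := le_trans (by positivity) hKlog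
    calc _ ≤ X * ((B:ℝ) / (L/40))^3 := by gcongr
      _ = _ := by field_simp
  have T6 : (((B*K)^3:ℕ):ℝ)^6 ≤ (B:ℝ)^18 * (X / L^3) := by
    push_cast
    calc (((B:ℝ)*K)^3)^6 = (B:ℝ)^18 * (K:ℝ)^18 := by ring
      _ ≤ (B:ℝ)^18 * (Real.exp (L/40))^18 := by gcongr
      _ ≤ (B:ℝ)^18 * (X / L^3) := by
        gcongr
        rw [le_div_iff₀ (by positivity), ← Real.exp_nat_mul]
        calc _ ≤ Real.exp (((18:ℕ):ℝ) * (L/40)) * Real.exp (L/2) := by gcongr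
          _ ≤ X := by
            rw [← Real.exp_add, hXexp, Real.exp_le_exp]
            push_cast; linarith
  have T7 : (((B*K)^3:ℕ):ℝ) ≤ (((B*K)^3:ℕ):ℝ)^6 := by
    exact_mod_cast Nat.le_self_pow (by norm_num) _
  have hfin : ∀ Y : ℝ, (1 + 8 + 27 + 216 + ((40*(B:ℝ))^3 + 2 * (B:ℝ)^18)) * Y =
    Y + 8*Y + 27*Y + 216*Y + ((40*(B:ℝ))^3*Y + (B:ℝ)^18*Y + (B:ℝ)^18*Y) := by intro Y; ring
  rw [hfin]
  linarith

end PhiHelpers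

open Filter Topology

theorem phi_equal_count_special (ℓ n : ℕ) (hn : 1 ≤ n) (hℓ : ℓ = 4 ^ n - 1) :
    ∃ C : ℝ, 0 < C ∧ ∀ᶠ x : ℝ in atTop,
      ({p : ℕ | p.Prime ∧ (p : ℝ) ≤ x ∧ ℓ < p ∧
          Nat.totient (p - ℓ) = Nat.totient (p + ℓ)}.ncard : ℝ) ≤
        C * x / (Real.log x) ^ 3 := by
  classical
  obtain ⟨C, hC, h⟩ := nat_bound n ℓ hn hℓ
  refine ⟨8 * C, by positivity, ?_⟩
  have h' := (tendsto_nat_floor_atTop (α := ℝ)).eventually h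
  filter_upwards [h', eventually_ge_atTop 4] with x hx hx4
  set X := ⌊x⌋₊ with hX
  have hXx : (X:ℝ) ≤ x := Nat.floor_le (by linarith)
  have hxX : x < X + 1 := Nat.lt_floor_add_one x
  have hX3 : (3:ℝ) ≤ X := by linarith
  have hlogX : 0 < Real.log X := Real.log_pos (by linarith)
  have hlogx : 0 < Real.log x := Real.log_pos (by linarith)
  have hll : Real.log x ≤ 2 * Real.log X := by
    rw [show 2 * Real.log (X:ℝ) = Real.log ((X:ℝ)^2) by rw [Real.log_pow]; push_cast; ring]
    apply Real.log_le_log (by linarith)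
    nlinarith
  have hset : {p : ℕ | p.Prime ∧ (p : ℝ) ≤ x ∧ ℓ < p ∧
          Nat.totient (p - ℓ) = Nat.totient (p + ℓ)} =
      (((Finset.Icc 1 X).filter (fun p => p.Prime ∧ ℓ < p ∧
      Nat.totient (p - ℓ) = Nat.totient (p + ℓ)) : Finset ℕ) : Set ℕ) := by
    ext p
    simp only [Finset.coe_filter, Finset.mem_Icc, Set.mem_ofPred_eq]
    constructor
    · rintro ⟨h1, h2, h3, h4⟩
      exact ⟨⟨h1.one_lt.le, Nat.le_floor h2⟩, h1, h3, h4⟩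
    · rintro ⟨⟨_, h2⟩, h1, h3, h4⟩
      exact ⟨h1, (Nat.cast_le.2 h2).trans hXx, h3, h4⟩
  rw [hset, Set.ncard_coe_finset]
  refine hx.trans ?_
  calc C * (X / Real.log X ^ 3) ≤ C * (x / (Real.log x / 2)^3) := by
        gcongr
        linarith
    _ = 8 * C * x / Real.log x ^ 3 := by field_simp; ring
end

section
/- For all sufficiently large x, the number of odd primes p ≤ x with φ(p−1) = φ(p+1) is less than x / exp((log x)^{1/3}) + 2. -/
open Filter Topology

theorem card_le_of_modEq (S : Finset ℕ) (Y Q : ℕ) (hS : ∀ n ∈ S, n ≤ Y)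
    (hQ : ∀ n ∈ S, ∀ n' ∈ S, n ≡ n' [MOD Q]) : S.card ≤ Y / Q + 1 := by
  have : S.card ≤ (Finset.range (Y / Q + 1)).card := by
    apply Finset.card_le_card_of_injOn (fun n => n / Q)
    · intro n hn
      have := Nat.div_le_div_right (c := Q) (hS n hn)
      simp only [Finset.coe_range, Set.mem_Iio]
      omega
    · intro n hn n' hn' h
      have h1 : n % Q = n' % Q := hQ n hn n' hn'
      simp only at h
      rw [← Nat.div_add_mod n Q, ← Nat.div_add_mod n' Q, h, h1]
  simpa using this

noncomputable def HH (Y : ℕ) : ℝ := ∑ n ∈ Finset.Icc 1 Y, (1 : ℝ) / n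

theorem HH_le (Y : ℕ) : HH Y ≤ 1 + Real.log Y := by
  have := harmonic_le_one_add_log Y
  rw [harmonic_eq_sum_Icc] at this
  push_cast at this
  simpa [HH] using this

theorem HH_nonneg (Y : ℕ) : 0 ≤ HH Y := Finset.sum_nonneg fun _ _ => by positivity

theorem HH_mono {Y Z : ℕ} (h : Y ≤ Z) : HH Y ≤ HH Z :=
  Finset.sum_le_sum_of_subset_of_nonneg (Finset.Icc_subset_Icc_right h) fun _ _ _ => by positivity

theorem one_le_HH {Y : ℕ} (h : 1 ≤ Y) : 1 ≤ HH Y := by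
  have := HH_mono h
  simpa [HH] using this

theorem omega_pow_le (M n : ℕ) (hn : n ≠ 0) :
    ((M : ℝ) + 1) ^ n.primeFactors.card ≤ ∑ d ∈ n.divisors, (M : ℝ) ^ d.primeFactors.card := by
  have h1 : ((M : ℝ) + 1) ^ n.primeFactors.card
      = ∑ t ∈ n.primeFactors.powerset, (M : ℝ) ^ t.card := by
    rw [← Finset.sum_pow_mul_eq_add_pow]
    simp
  rw [h1]
  have h2 : ∀ t ∈ n.primeFactors.powerset, (∏ p ∈ t, p).primeFactors = t := by
    intro t ht
    apply Nat.primeFactors_prod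
    intro p hp
    exact Nat.prime_of_mem_primeFactors (Finset.mem_powerset.1 ht hp)
  have h3 : ∑ t ∈ n.primeFactors.powerset, (M : ℝ) ^ t.card
      = ∑ d ∈ n.primeFactors.powerset.image (fun t => ∏ p ∈ t, p), (M : ℝ) ^ d.primeFactors.card := by
    rw [Finset.sum_image]
    · apply Finset.sum_congr rfl
      intro t ht
      rw [h2 t ht]
    · intro t ht t' ht' h
      simp only at h
      rw [← h2 t ht, ← h2 t' ht', h]
  rw [h3]
  apply Finset.sum_le_sum_of_subset_of_nonneg
  · intro d hd
    obtain ⟨t, ht, rfl⟩ := Finset.mem_image.1 hd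
    rw [Nat.mem_divisors]
    refine ⟨?_, hn⟩
    exact (Finset.prod_dvd_prod_of_subset _ _ _ (Finset.mem_powerset.1 ht)).trans
      (Nat.prod_primeFactors_dvd n)
  · intros; positivity

theorem omega_sum (Y M : ℕ) :
    ∑ n ∈ Finset.Icc 1 Y, (M : ℝ) ^ n.primeFactors.card / n ≤ HH Y ^ M := by
  induction M with
  | zero =>
    have : ∀ n ∈ Finset.Icc 1 Y, ((0 : ℕ) : ℝ) ^ n.primeFactors.card / n
        = if n = 1 then 1 else 0 := by
      intro n hn
      rw [Finset.mem_Icc] at hn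
      split_ifs with h
      · simp [h]
      · have : n.primeFactors.card ≠ 0 := by
          rw [Finset.card_ne_zero, Nat.nonempty_primeFactors]; omega
        simp [this]
    rw [Finset.sum_congr rfl this, Finset.sum_ite_eq']
    split_ifs <;> simp
  | succ M ih =>
    calc ∑ n ∈ Finset.Icc 1 Y, ((M + 1 : ℕ) : ℝ) ^ n.primeFactors.card / n
        ≤ ∑ n ∈ Finset.Icc 1 Y, ∑ x ∈ n.divisorsAntidiagonal,
            ((M : ℝ) ^ x.1.primeFactors.card / x.1) * (1 / (x.2 : ℝ)) := by
          apply Finset.sum_le_sum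
          intro n hn
          rw [Finset.mem_Icc] at hn
          have h := omega_pow_le M n (by omega)
          rw [Nat.sum_divisorsAntidiagonal
            (f := fun a b => ((M : ℝ) ^ a.primeFactors.card / a) * (1 / (b : ℝ)))]
          push_cast
          calc ((M : ℝ) + 1) ^ n.primeFactors.card / n
              ≤ (∑ d ∈ n.divisors, (M : ℝ) ^ d.primeFactors.card) / n := by gcongr
            _ = _ := by
              rw [Finset.sum_div]
              apply Finset.sum_congr rfl
              intro d hd
              have hd' := Nat.dvd_of_mem_divisors hd
              have hd0 : d ≠ 0 := by rintro rfl; simp at hd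
              obtain ⟨e, rfl⟩ := hd'
              have : d * e / d = e := Nat.mul_div_cancel_left _ (Nat.pos_of_ne_zero hd0)
              rw [this]
              push_cast
              rw [div_mul_div_comm, mul_one]
      _ = ∑ x ∈ (Finset.Icc 1 Y).biUnion Nat.divisorsAntidiagonal,
            ((M : ℝ) ^ x.1.primeFactors.card / x.1) * (1 / (x.2 : ℝ)) := by
          rw [Finset.sum_biUnion]
          intro a _ b _ hab
          rw [Function.onFun, Finset.disjoint_left]
          intro x hx hx'
          rw [Nat.mem_divisorsAntidiagonal] at hx hx'
          exact hab (hx.1.symm.trans hx'.1)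
      _ ≤ ∑ x ∈ Finset.Icc 1 Y ×ˢ Finset.Icc 1 Y,
            ((M : ℝ) ^ x.1.primeFactors.card / x.1) * (1 / (x.2 : ℝ)) := by
          apply Finset.sum_le_sum_of_subset_of_nonneg
          · intro x hx
            simp only [Finset.mem_biUnion, Finset.mem_Icc, Nat.mem_divisorsAntidiagonal] at hx
            obtain ⟨n, hn, h, h0⟩ := hx
            have h1 : x.1 ≠ 0 := by rintro h'; simp [h'] at h; omega
            have h2 : x.2 ≠ 0 := by rintro h'; simp [h'] at h; omega
            have h3 : x.1 ≤ n := h ▸ Nat.le_mul_of_pos_right _ (by omega)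
            have h4 : x.2 ≤ n := h ▸ Nat.le_mul_of_pos_left _ (by omega)
            simp only [Finset.mem_product, Finset.mem_Icc]
            omega
          · intros; positivity
      _ = (∑ n ∈ Finset.Icc 1 Y, (M : ℝ) ^ n.primeFactors.card / n) * HH Y := by
          rw [HH, Finset.sum_product, Finset.sum_mul_sum]
      _ ≤ HH Y ^ M * HH Y := by gcongr; exact HH_nonneg Y
      _ = _ := by rw [pow_succ]

theorem omega_count (Y M K : ℕ) (hM : 1 ≤ M) :
    (((Finset.Icc 1 Y).filter fun n => K < n.primeFactors.card).card : ℝ) * (M : ℝ) ^ (K + 1)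
      ≤ Y * HH Y ^ M := by
  have hM' : (1 : ℝ) ≤ M := by exact_mod_cast hM
  calc _ = ∑ n ∈ (Finset.Icc 1 Y).filter (fun n => K < n.primeFactors.card), (M : ℝ) ^ (K + 1) := by
        rw [Finset.sum_const, nsmul_eq_mul]
    _ ≤ ∑ n ∈ (Finset.Icc 1 Y).filter (fun n => K < n.primeFactors.card),
          (Y : ℝ) * ((M : ℝ) ^ n.primeFactors.card / n) := by
        apply Finset.sum_le_sum
        intro n hn
        simp only [Finset.mem_filter, Finset.mem_Icc] at hn
        have h1 : (M : ℝ) ^ (K + 1) ≤ (M : ℝ) ^ n.primeFactors.card :=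
          pow_le_pow_right₀ hM' hn.2
        have hn0 : (0 : ℝ) < n := by exact_mod_cast hn.1.1
        have hnY : (n : ℝ) ≤ Y := by exact_mod_cast hn.1.2
        rw [mul_div_assoc', le_div_iff₀ hn0]
        nlinarith [pow_nonneg (by linarith : (0 : ℝ) ≤ M) n.primeFactors.card]
    _ ≤ ∑ n ∈ Finset.Icc 1 Y, (Y : ℝ) * ((M : ℝ) ^ n.primeFactors.card / n) := by
        apply Finset.sum_le_sum_of_subset_of_nonneg (Finset.filter_subset _ _)
        intros; positivity
    _ ≤ _ := by
        rw [← Finset.mul_sum]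
        have := omega_sum Y M
        gcongr

theorem sum_inv_sq (D Z : ℕ) (hD : 1 ≤ D) :
    ∑ d ∈ Finset.Icc D Z, (1 : ℝ) / (d : ℝ) ^ 2 ≤ 2 / D := by
  have h := sum_Ioo_inv_sq_le (α := ℝ) (D - 1) (Z + 1)
  have h1 : Finset.Ioo (D - 1) (Z + 1) = Finset.Icc D Z := by
    ext; simp only [Finset.mem_Ioo, Finset.mem_Icc]; omega
  rw [h1, Nat.cast_sub hD] at h
  simpa using h

open Classical in
theorem sq_count (Y R : ℕ) (hR : 1 ≤ R) :
    (((Finset.Icc 1 Y).filter fun n => ∃ r, R ≤ r ∧ r ^ 2 ∣ n).card : ℝ) ≤ Y * (2 / R) := by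
  have hsub : ((Finset.Icc 1 Y).filter fun n => ∃ r, R ≤ r ∧ r ^ 2 ∣ n) ⊆
      (Finset.Icc R Y).biUnion fun r => (Finset.Ioc 0 Y).filter fun n => r ^ 2 ∣ n := by
    intro n hn
    simp only [Finset.mem_filter, Finset.mem_Icc, Finset.mem_biUnion, Finset.mem_Ioc] at hn ⊢
    obtain ⟨⟨h1, h2⟩, r, hr, hd⟩ := hn
    have := Nat.le_of_dvd (by omega) hd
    refine ⟨r, ⟨hr, ?_⟩, ⟨by omega, h2⟩, hd⟩
    nlinarith
  have h1 := (Finset.card_le_card hsub).trans Finset.card_biUnion_le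
  simp only [Nat.Ioc_filter_dvd_card_eq_div] at h1
  calc _ ≤ ((∑ r ∈ Finset.Icc R Y, Y / r ^ 2 : ℕ) : ℝ) := by exact_mod_cast h1
    _ ≤ ∑ r ∈ Finset.Icc R Y, (Y : ℝ) * (1 / (r : ℝ) ^ 2) := by
      push_cast
      apply Finset.sum_le_sum
      intro r _
      have := @Nat.cast_div_le ℝ _ _ _ Y (r ^ 2)
      push_cast at this
      rw [mul_one_div]; exact this
    _ ≤ _ := by
      rw [← Finset.mul_sum]
      have := sum_inv_sq R Y hR
      gcongr

open Classical in
theorem pair_count (Y X D : ℕ) (hD : 1 ≤ D) (hYX : Y ≤ X) :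
    (((Finset.Icc 1 Y).filter fun n => ∃ p q : ℕ, p.Prime ∧ q.Prime ∧ p ≠ q ∧ p ∣ n ∧ q ∣ n + 2 ∧
      D ≤ Nat.gcd (p - 1) (q - 1) ∧ p * q ≤ X).card : ℝ) ≤ 2 * X * (2 / D) * HH X ^ 2 := by
  set T := (Finset.Icc D X ×ˢ (Finset.Icc 1 X ×ˢ Finset.Icc 1 X)).filter
    (fun t => (t.1 * t.2.1 + 1).Coprime (t.1 * t.2.2 + 1) ∧
      (t.1 * t.2.1 + 1) * (t.1 * t.2.2 + 1) ≤ X) with hT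
  set F : ℕ × ℕ × ℕ → Finset ℕ := fun t => (Finset.Icc 1 Y).filter fun n =>
    (t.1 * t.2.1 + 1) ∣ n ∧ (t.1 * t.2.2 + 1) ∣ n + 2 with hF
  have hsub : ((Finset.Icc 1 Y).filter fun n => ∃ p q : ℕ, p.Prime ∧ q.Prime ∧ p ≠ q ∧ p ∣ n ∧
      q ∣ n + 2 ∧ D ≤ Nat.gcd (p - 1) (q - 1) ∧ p * q ≤ X) ⊆ T.biUnion F := by
    intro n hn
    rw [Finset.mem_filter] at hn
    obtain ⟨hn, p, q, hp, hq, hpq, hpn, hqn, hg, hX⟩ := hn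
    set g := Nat.gcd (p - 1) (q - 1) with hgdef
    obtain ⟨a, ha⟩ : g ∣ p - 1 := Nat.gcd_dvd_left _ _
    obtain ⟨b, hb⟩ : g ∣ q - 1 := Nat.gcd_dvd_right _ _
    have hp2 := hp.two_le
    have hq2 := hq.two_le
    have hp' : g * a + 1 = p := by omega
    have hq' : g * b + 1 = q := by omega
    have ha0 : 1 ≤ a := by
      rcases Nat.eq_zero_or_pos a with h | h
      · rw [h] at ha; omega
      · exact h
    have hb0 : 1 ≤ b := by
      rcases Nat.eq_zero_or_pos b with h | h
      · rw [h] at hb; omega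
      · exact h
    have hpX : p ≤ X := le_trans (Nat.le_mul_of_pos_right _ (by omega)) hX
    have hqX : q ≤ X := le_trans (Nat.le_mul_of_pos_left _ (by omega)) hX
    have h1 : g ≤ g * a := Nat.le_mul_of_pos_right _ ha0
    have h2 : a ≤ g * a := Nat.le_mul_of_pos_left _ (by omega)
    have h3 : b ≤ g * b := Nat.le_mul_of_pos_left _ (by omega)
    rw [Finset.mem_biUnion]
    refine ⟨(g, a, b), ?_, ?_⟩
    · simp only [hT, Finset.mem_filter, Finset.mem_product, Finset.mem_Icc, hp', hq']
      refine ⟨⟨⟨hg, by omega⟩, ⟨ha0, by omega⟩, hb0, by omega⟩, ?_, hX⟩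
      exact (Nat.coprime_primes hp hq).2 hpq
    · simp only [hF, Finset.mem_filter, hp', hq']
      exact ⟨hn, hpn, hqn⟩
  have h1 := (Finset.card_le_card hsub).trans Finset.card_biUnion_le
  have h2 : ∀ t ∈ T, ((F t).card : ℝ) ≤
      2 * X * ((1 / (t.1 : ℝ) ^ 2) * ((1 / (t.2.1 : ℝ)) * (1 / (t.2.2 : ℝ)))) := by
    rintro ⟨d, a, b⟩ ht
    simp only [hT, Finset.mem_filter, Finset.mem_product, Finset.mem_Icc] at ht
    obtain ⟨⟨⟨hd, -⟩, ⟨ha, -⟩, hb, -⟩, hc, hX⟩ := ht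
    have h3 : (F (d, a, b)).card ≤ Y / ((d * a + 1) * (d * b + 1)) + 1 := by
      apply card_le_of_modEq
      · intro n hn
        simp only [hF, Finset.mem_filter, Finset.mem_Icc] at hn
        exact hn.1.2
      · intro n hn n' hn'
        simp only [hF, Finset.mem_filter, Finset.mem_Icc] at hn hn'
        rw [← Nat.modEq_and_modEq_iff_modEq_mul hc]
        constructor
        · exact ((Nat.modEq_zero_iff_dvd).2 hn.2.1).trans ((Nat.modEq_zero_iff_dvd).2 hn'.2.1).symm
        · apply Nat.ModEq.add_right_cancel' 2
          exact ((Nat.modEq_zero_iff_dvd).2 hn.2.2).trans ((Nat.modEq_zero_iff_dvd).2 hn'.2.2).symm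
    have hd0 : (0 : ℝ) < d := by exact_mod_cast (by omega : 0 < d)
    have ha0 : (0 : ℝ) < a := by exact_mod_cast ha
    have hb0 : (0 : ℝ) < b := by exact_mod_cast hb
    have hX' : ((d : ℝ) * a + 1) * (d * b + 1) ≤ X := by exact_mod_cast hX
    have hYX' : (Y : ℝ) ≤ X := by exact_mod_cast hYX
    have hpos : (0 : ℝ) < (d * a + 1) * (d * b + 1) := by positivity
    calc ((F (d, a, b)).card : ℝ) ≤ ((Y / ((d * a + 1) * (d * b + 1)) + 1 : ℕ) : ℝ) := by
          exact_mod_cast h3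
      _ ≤ Y / (((d : ℝ) * a + 1) * (d * b + 1)) + 1 := by
          have := @Nat.cast_div_le ℝ _ _ _ Y ((d * a + 1) * (d * b + 1))
          push_cast at this ⊢
          linarith
      _ ≤ X / (((d : ℝ) * a + 1) * (d * b + 1)) + X / (((d : ℝ) * a + 1) * (d * b + 1)) := by
          gcongr
          rw [le_div_iff₀ hpos]; linarith
      _ = 2 * X / (((d : ℝ) * a + 1) * (d * b + 1)) := by ring
      _ ≤ 2 * X / ((d * a) * (d * b)) := by
          gcongr <;> linarith
      _ = _ := by field_simp
  calc _ ≤ ((∑ t ∈ T, (F t).card : ℕ) : ℝ) := by exact_mod_cast h1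
    _ ≤ ∑ t ∈ T, 2 * X * ((1 / (t.1 : ℝ) ^ 2) * ((1 / (t.2.1 : ℝ)) * (1 / (t.2.2 : ℝ)))) := by
        push_cast
        exact Finset.sum_le_sum h2
    _ ≤ ∑ t ∈ (Finset.Icc D X ×ˢ (Finset.Icc 1 X ×ˢ Finset.Icc 1 X)),
          2 * X * ((1 / (t.1 : ℝ) ^ 2) * ((1 / (t.2.1 : ℝ)) * (1 / (t.2.2 : ℝ)))) := by
        apply Finset.sum_le_sum_of_subset_of_nonneg (Finset.filter_subset _ _)
        intros; positivity
    _ = 2 * X * ((∑ d ∈ Finset.Icc D X, 1 / (d : ℝ) ^ 2) * (HH X * HH X)) := by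
        rw [← Finset.mul_sum, Finset.sum_product, HH, Finset.sum_mul_sum, Finset.sum_mul_sum]
        congr 1
        apply Finset.sum_congr rfl
        intro d _
        rw [Finset.sum_product]
        dsimp only
        apply Finset.sum_congr rfl
        intro a _
        rw [Finset.mul_sum]
    _ ≤ 2 * X * ((2 / D) * (HH X * HH X)) := by
        have := sum_inv_sq D X hD
        have := HH_nonneg X
        gcongr
    _ = _ := by ring

theorem le_sq_mul_rad (n R : ℕ) (h : ∀ r, R ≤ r → ¬ r ^ 2 ∣ n) (hn : n ≠ 0) :
    n ≤ R ^ 2 * ∏ p ∈ n.primeFactors, p := by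
  obtain ⟨a, b, hab, hsq⟩ := Nat.sq_mul_squarefree n
  have hb : b < R := by
    by_contra hb
    exact h b (by omega) ⟨a, hab.symm⟩
  have ha : a ≤ ∏ p ∈ n.primeFactors, p := by
    apply Nat.le_of_dvd
    · exact Finset.prod_pos fun p hp => (Nat.prime_of_mem_primeFactors hp).pos
    · conv_lhs => rw [← Nat.prod_primeFactors_of_squarefree hsq]
      apply Finset.prod_dvd_prod_of_subset
      apply Nat.primeFactors_mono _ hn
      exact ⟨b ^ 2, by rw [← hab]; ring⟩
  rw [← hab] at ha ⊢
  gcongr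

theorem dvd_prod_gcd (k : ℕ) (s : Finset ℕ) (f : ℕ → ℕ) (c : ℕ) (h : k ∣ c * ∏ i ∈ s, f i) :
    k ∣ c * ∏ i ∈ s, Nat.gcd k (f i) := by
  classical
  have h1 : ∀ s : Finset ℕ, Nat.gcd k (∏ i ∈ s, f i) ∣ ∏ i ∈ s, Nat.gcd k (f i) := by
    intro s
    induction s using Finset.induction_on with
    | empty => simp
    | insert a s ha ih =>
      rw [Finset.prod_insert ha, Finset.prod_insert ha]
      exact (Nat.gcd_mul_right_dvd_mul_gcd _ _ _).trans (mul_dvd_mul_left _ ih)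
  have h2 : k ∣ Nat.gcd k (c * ∏ i ∈ s, f i) := Nat.dvd_gcd dvd_rfl h
  exact h2.trans ((Nat.gcd_mul_right_dvd_mul_gcd _ _ _).trans
    (mul_dvd_mul (Nat.gcd_dvd_right _ _) (h1 s)))

theorem exists_gcd_large (N R K D k : ℕ) (hN : N ≠ 0) (h : ∀ r, R ≤ r → ¬ r ^ 2 ∣ N)
    (hK : N.primeFactors.card ≤ K) (hD : 1 ≤ D) (hk : k ∣ N.totient) (hbig : R ^ 2 * D ^ K < k) :
    ∃ q ∈ N.primeFactors, D ≤ Nat.gcd k (q - 1) := by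
  by_contra! hcon
  have hradpos : 0 < ∏ p ∈ N.primeFactors, p :=
    Finset.prod_pos fun p hp => (Nat.prime_of_mem_primeFactors hp).pos
  rw [Nat.totient_eq_div_primeFactors_mul] at hk
  have h1 := dvd_prod_gcd k _ _ _ hk
  have h2 : N / ∏ p ∈ N.primeFactors, p ≤ R ^ 2 :=
    Nat.div_le_of_le_mul (by rw [mul_comm]; exact le_sq_mul_rad N R h hN)
  have h3 : ∏ q ∈ N.primeFactors, Nat.gcd k (q - 1) ≤ D ^ K :=
    (Finset.prod_le_pow_card _ _ D fun q hq => (hcon q hq).le).trans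
      (Nat.pow_le_pow_right hD hK)
  have hk0 : 0 < k := by omega
  have h4 := Nat.le_of_dvd (by
    apply Nat.mul_pos
    · exact Nat.div_pos (Nat.le_of_dvd (by omega) (Nat.prod_primeFactors_dvd N)) hradpos
    · exact Finset.prod_pos fun q _ => Nat.gcd_pos_of_pos_left _ hk0) h1
  have := Nat.mul_le_mul h2 h3
  omega

theorem all_two (m m' : ℕ) (hm : m ≠ 0) (hm' : m' ≠ 0) (hg : Nat.gcd m m' ∣ 2)
    (h : m * m'.totient = m' * m.totient) : ∀ r, r.Prime → r ∣ m * m' → r = 2 := by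
  have e1 := Nat.totient_mul_prod_primeFactors m
  have e2 := Nat.totient_mul_prod_primeFactors m'
  set A := ∏ p ∈ m.primeFactors, p with hA
  set B := ∏ p ∈ m.primeFactors, (p - 1) with hB
  set A' := ∏ p ∈ m'.primeFactors, p with hA'
  set B' := ∏ p ∈ m'.primeFactors, (p - 1) with hB'
  have key : A * B' = A' * B := by
    have hpos : 0 < m * m' := Nat.mul_pos (by omega) (by omega)
    apply Nat.eq_of_mul_eq_mul_left hpos
    calc m * m' * (A * B') = m * A * (m' * B') := by ring
      _ = (m * m'.totient) * A * A' := by rw [← e2]; ring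
      _ = m' * A' * (m.totient * A) := by rw [h]; ring
      _ = _ := by rw [e1]; ring
  by_contra! hcon
  obtain ⟨r0, hr0, hr0d, hr02⟩ := hcon
  have hne : (m * m').primeFactors.Nonempty :=
    ⟨r0, Nat.mem_primeFactors.2 ⟨hr0, hr0d, by positivity⟩⟩
  obtain ⟨r, hr, hmax⟩ := Finset.exists_max_image _ id hne
  simp only [id] at hmax
  have hrp := Nat.prime_of_mem_primeFactors hr
  have hr2 : r ≠ 2 := by
    have h1 := hmax r0 (Nat.mem_primeFactors.2 ⟨hr0, hr0d, by positivity⟩)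
    have := hr0.two_le
    omega
  have aux : ∀ u v : ℕ, u ≠ 0 → v ≠ 0 → (∀ s, s ∈ v.primeFactors → s ≤ r) →
      (∏ p ∈ v.primeFactors, p) * (∏ p ∈ u.primeFactors, (p - 1)) =
      (∏ p ∈ u.primeFactors, p) * (∏ p ∈ v.primeFactors, (p - 1)) → r ∣ v → r ∣ u := by
    intro u v hu hv hs he hrv
    have h1 : r ∣ (∏ p ∈ u.primeFactors, p) * (∏ p ∈ v.primeFactors, (p - 1)) := by
      rw [← he]
      apply Dvd.dvd.mul_right
      exact Finset.dvd_prod_of_mem (fun p => p) (Nat.mem_primeFactors.2 ⟨hrp, hrv, hv⟩)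
    rcases hrp.dvd_mul.1 h1 with h2 | h2
    · exact h2.trans (Nat.prod_primeFactors_dvd u)
    · obtain ⟨s, hsv, hd⟩ := (hrp.prime.dvd_finsetProd_iff _).1 h2
      have := hs s hsv
      have := (Nat.prime_of_mem_primeFactors hsv).two_le
      have := Nat.le_of_dvd (by omega) hd
      omega
  have hb1 : ∀ s, s ∈ m.primeFactors → s ≤ r := fun s hs =>
    hmax s (Nat.primeFactors_mono (Dvd.intro _ rfl) (by positivity) hs)
  have hb2 : ∀ s, s ∈ m'.primeFactors → s ≤ r := fun s hs =>
    hmax s (Nat.primeFactors_mono (Dvd.intro_left _ rfl) (by positivity) hs)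
  have hboth : r ∣ m ∧ r ∣ m' := by
    rcases hrp.dvd_mul.1 (Nat.dvd_of_mem_primeFactors hr) with h1 | h1
    · exact ⟨h1, aux m' m hm' hm hb1 key h1⟩
    · exact ⟨aux m m' hm hm' hb2 key.symm h1, h1⟩
  have := (Nat.dvd_gcd hboth.1 hboth.2).trans hg
  exact hr2 ((Nat.prime_dvd_prime_iff_eq hrp Nat.prime_two).1 this)

theorem no_special (n m m' p q : ℕ) (hn0 : n ≠ 0) (hev : Even n) (hpr : (n + 1).Prime) (hp : p.Prime)
    (hq : q.Prime) (hp3 : 3 < p) (hq3 : 3 < q) (hn : n = m * p) (hN : n + 2 = m' * q)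
    (hpm : ¬ p ∣ m) (hqm : ¬ q ∣ m') (hphi : n.totient = (n + 2).totient) :
    m * m'.totient ≠ m' * m.totient := by
  intro h
  have hm : m ≠ 0 := by rintro rfl; simp at hn; exact hn0 hn
  have hm' : m' ≠ 0 := by rintro rfl; simp at hN
  have hg : Nat.gcd m m' ∣ 2 := by
    have h1 : Nat.gcd m m' ∣ n := hn ▸ (Nat.gcd_dvd_left m m').mul_right p
    have h2 : Nat.gcd m m' ∣ n + 2 := hN ▸ (Nat.gcd_dvd_right m m').mul_right q
    exact (Nat.dvd_add_right h1).1 h2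
  have h2 := all_two m m' hm hm' hg h
  have e1 := Nat.eq_prime_pow_of_unique_prime_dvd hm (p := 2)
    (fun {d} hd hdm => h2 d hd (hdm.mul_right _))
  have e2 := Nat.eq_prime_pow_of_unique_prime_dvd hm' (p := 2)
    (fun {d} hd hdm => h2 d hd (hdm.mul_left _))
  have hpo : ¬ 2 ∣ p := fun hd => by
    have := (Nat.prime_dvd_prime_iff_eq Nat.prime_two hp).1 hd; omega
  have hqo : ¬ 2 ∣ q := fun hd => by
    have := (Nat.prime_dvd_prime_iff_eq Nat.prime_two hq).1 hd; omega
  have hevd : 2 ∣ n := hev.two_dvd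
  have d1 : 2 ∣ m := (Nat.prime_two.dvd_mul.1 (hn ▸ hevd)).resolve_right hpo
  have d2 : 2 ∣ m' := (Nat.prime_two.dvd_mul.1 (hN ▸ (by omega : 2 ∣ n + 2))).resolve_right hqo
  generalize m.primeFactorsList.length = a at e1
  generalize m'.primeFactorsList.length = b at e2
  rcases a with _ | a
  · simp at e1; omega
  rcases b with _ | b
  · simp at e2; omega
  have t1 : m.totient = 2 ^ a := by
    rw [e1, Nat.totient_prime_pow_succ Nat.prime_two]; simp
  have t2 : m'.totient = 2 ^ b := by
    rw [e2, Nat.totient_prime_pow_succ Nat.prime_two]; simp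
  have f1 : n.totient = 2 ^ a * (p - 1) := by
    rw [hn, Nat.totient_mul ((Nat.Prime.coprime_iff_not_dvd hp).2 hpm).symm, t1,
      Nat.totient_prime hp]
  have f2 : (n + 2).totient = 2 ^ b * (q - 1) := by
    rw [hN, Nat.totient_mul ((Nat.Prime.coprime_iff_not_dvd hq).2 hqm).symm, t2,
      Nat.totient_prime hq]
  rw [f1, f2] at hphi
  rw [e1, pow_succ] at hn
  rw [e2, pow_succ] at hN
  obtain ⟨p', rfl⟩ : ∃ p', p = p' + 1 := ⟨p - 1, by omega⟩
  obtain ⟨q', rfl⟩ : ∃ q', q = q' + 1 := ⟨q - 1, by omega⟩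
  simp only [Nat.add_sub_cancel] at hphi
  have g : 2 ^ b = 2 ^ a + 1 := by nlinarith
  rcases a with _ | a
  · simp at g hn hphi
    have hb : 2 ^ b = 2 := by omega
    rw [hb] at hN hphi
    have c : (q' + 1) % 3 = 0 ∨ (q' + 1) % 3 = 1 ∨ (q' + 1) % 3 = 2 := by omega
    rcases c with c | c | c
    · have := (Nat.prime_dvd_prime_iff_eq Nat.prime_three hq).1 (Nat.dvd_of_mod_eq_zero c)
      omega
    · have := (Nat.prime_dvd_prime_iff_eq Nat.prime_three hpr).1 (Nat.dvd_of_mod_eq_zero (by omega))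
      omega
    · have := (Nat.prime_dvd_prime_iff_eq Nat.prime_three hp).1 (Nat.dvd_of_mod_eq_zero (by omega))
      omega
  · rcases b with _ | b
    · have : 0 < 2 ^ (a + 1) := by positivity
      simp at g
    · rw [pow_succ, pow_succ] at g
      omega

def IsGood (Z n m m' p q : ℕ) : Prop :=
  p.Prime ∧ q.Prime ∧ 3 < p ∧ 3 < q ∧ n = m * p ∧ n + 2 = m' * q ∧ ¬ p ∣ m ∧ ¬ q ∣ m' ∧ m * m' ≤ Z

theorem hyperbola (Z : ℕ) :
    (((Finset.Icc 1 Z).sigma fun m => Finset.Icc 1 (Z / m)).card : ℝ) ≤ Z * HH Z := by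
  rw [Finset.card_sigma, HH, Finset.mul_sum]
  push_cast
  apply Finset.sum_le_sum
  intro m _
  rw [Nat.card_Icc, Nat.add_sub_cancel, mul_one_div]
  exact Nat.cast_div_le

open Classical in
theorem good_count (Y Z : ℕ) :
    (((Finset.Icc 1 Y).filter fun n => Even n ∧ (n + 1).Prime ∧ n.totient = (n + 2).totient ∧
      ∃ m m' p q, IsGood Z n m m' p q).card : ℝ) ≤ Z * HH Z := by
  refine le_trans ?_ (hyperbola Z)
  norm_cast
  apply Finset.card_le_card_of_forall_subsingleton
    (fun n (t : Σ _ : ℕ, ℕ) => ∃ p q, IsGood Z n t.1 t.2 p q)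
  · intro n hn
    simp only [Finset.mem_filter, Finset.mem_Icc] at hn
    obtain ⟨⟨hn1, -⟩, -, -, -, m, m', p, q, h⟩ := hn
    refine ⟨⟨m, m'⟩, ?_, p, q, h⟩
    obtain ⟨-, -, -, -, h1, h2, -, -, hZ⟩ := h
    have hm : 1 ≤ m := Nat.pos_of_ne_zero (by rintro rfl; simp at h1; omega)
    have hm' : 1 ≤ m' := Nat.pos_of_ne_zero (by rintro rfl; simp at h2)
    simp only [Finset.mem_sigma, Finset.mem_Icc]
    refine ⟨⟨hm, ?_⟩, hm', ?_⟩
    · nlinarith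
    · rw [Nat.le_div_iff_mul_le hm, mul_comm]; exact hZ
  · rintro ⟨m, m'⟩ -
    intro n hn k hk
    simp only [Set.mem_ofPred_eq, Finset.mem_filter, Finset.mem_Icc] at hn hk
    obtain ⟨⟨⟨hn1, -⟩, hev, hpr, hphi⟩, p, q, h⟩ := hn
    obtain ⟨⟨⟨hk1, -⟩, -, -, hphi', -⟩, p', q', h'⟩ := hk
    obtain ⟨hp, hq, hp3, hq3, e1, e2, d1, d2, -⟩ := h
    obtain ⟨hp', hq', -, -, e1', e2', d1', d2', -⟩ := h'
    have hns := no_special n m m' p q (by omega) hev hpr hp hq hp3 hq3 e1 e2 d1 d2 hphi.1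
    by_contra hne
    apply hns
    have f1 : n.totient = m.totient * (p - 1) := by
      rw [e1, Nat.totient_mul ((Nat.Prime.coprime_iff_not_dvd hp).2 d1).symm, Nat.totient_prime hp]
    have f2 : (n + 2).totient = m'.totient * (q - 1) := by
      rw [e2, Nat.totient_mul ((Nat.Prime.coprime_iff_not_dvd hq).2 d2).symm, Nat.totient_prime hq]
    have f1' : k.totient = m.totient * (p' - 1) := by
      rw [e1', Nat.totient_mul ((Nat.Prime.coprime_iff_not_dvd hp').2 d1').symm,
        Nat.totient_prime hp']
    have f2' : (k + 2).totient = m'.totient * (q' - 1) := by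
      rw [e2', Nat.totient_mul ((Nat.Prime.coprime_iff_not_dvd hq').2 d2').symm,
        Nat.totient_prime hq']
    have g1 : m.totient * (p - 1) = m'.totient * (q - 1) := by rw [← f1, ← f2, hphi.1]
    have g2 : m.totient * (p' - 1) = m'.totient * (q' - 1) := by rw [← f1', ← f2', hphi']
    have hpp : p ≠ p' := by rintro rfl; exact hne (e1.trans e1'.symm)
    have hpp1 := hp.one_le
    have hqq1 := hq.one_le
    have hpp1' := hp'.one_le
    have hqq1' := hq'.one_le
    zify [hpp1, hqq1, hpp1', hqq1'] at g1 g2 e1 e2 e1' e2' ⊢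
    have hsub : ((p : ℤ) - p') ≠ 0 := by
      intro h; apply hpp; zify; linarith
    have k1 : (m : ℤ) * (p - p') = m' * (q - q') := by linarith
    have k2 : (m.totient : ℤ) * (p - p') = m'.totient * (q - q') := by linarith
    apply mul_right_cancel₀ hsub
    calc (m : ℤ) * m'.totient * (p - p') = (m * (p - p')) * m'.totient := by ring
      _ = m' * (m'.totient * (q - q')) := by rw [k1]; ring
      _ = _ := by rw [← k2]; ring

theorem big_prime (n R K B Y p : ℕ) (hn : n ≠ 0) (h : ∀ r, R ≤ r → ¬ r ^ 2 ∣ n)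
    (hK : n.primeFactors.card ≤ K) (hY : Y < n * R) (hB : R ^ 3 * (B + 1) ^ K ≤ Y)
    (hmax : ∀ r ∈ n.primeFactors, r ≤ p) : B + 1 < p := by
  by_contra! hle
  have h1 := le_sq_mul_rad n R h hn
  have h2 : ∏ q ∈ n.primeFactors, q ≤ (B + 1) ^ K :=
    (Finset.prod_le_pow_card _ _ (B + 1) fun q hq => (hmax q hq).trans hle).trans
      (Nat.pow_le_pow_right (by omega) hK)
  have h3 : n * R ≤ R ^ 2 * (B + 1) ^ K * R :=
    Nat.mul_le_mul_right _ (h1.trans (Nat.mul_le_mul_left _ h2))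
  have h4 : R ^ 2 * (B + 1) ^ K * R = R ^ 3 * (B + 1) ^ K := by ring
  omega

theorem exists_max_prime (n : ℕ) (hn : 2 ≤ n) :
    ∃ p, p.Prime ∧ p ∣ n ∧ ∀ r ∈ n.primeFactors, r ≤ p := by
  obtain ⟨p, hp, hmax⟩ := Finset.exists_max_image n.primeFactors id
    (Nat.nonempty_primeFactors.2 (by omega))
  exact ⟨p, Nat.prime_of_mem_primeFactors hp, Nat.dvd_of_mem_primeFactors hp, hmax⟩

open Classical in
theorem main_subset (Y R K D : ℕ) (hR : 2 ≤ R) (hD : 1 ≤ D)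
    (hB : R ^ 3 * (R ^ 2 * D ^ K + 1) ^ K ≤ Y) (n : ℕ) (hn1 : 1 ≤ n) (hnY : n + 2 ≤ Y)
    (hev : Even n) (hphi : n.totient = (n + 2).totient)
    (h0 : Y < n * R) (hs : ∀ r, R ≤ r → ¬ r ^ 2 ∣ n) (hs' : ∀ r, R ≤ r → ¬ r ^ 2 ∣ n + 2)
    (hK : n.primeFactors.card ≤ K) (hK' : (n + 2).primeFactors.card ≤ K) :
    (∃ p q : ℕ, p.Prime ∧ q.Prime ∧ p ≠ q ∧ p ∣ n ∧ q ∣ n + 2 ∧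
      D ≤ Nat.gcd (p - 1) (q - 1) ∧ p * q ≤ Y * R) ∨
    ∃ m m' p q, IsGood (Y / R) n m m' p q := by
  have hn2 : 2 ≤ n := by obtain ⟨k, hk⟩ := hev; omega
  obtain ⟨p, hp, hpn, hpmax⟩ := exists_max_prime n hn2
  obtain ⟨q, hq, hqn, hqmax⟩ := exists_max_prime (n + 2) (by omega)
  have hpB := big_prime n R K _ Y p (by omega) hs hK h0 hB hpmax
  have hqB := big_prime (n + 2) R K _ Y q (by omega) hs' hK' (by nlinarith) hB hqmax
  have hDK : 1 ≤ D ^ K := Nat.one_le_pow _ _ hD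
  have hRB : R ^ 2 ≤ R ^ 2 * D ^ K := Nat.le_mul_of_pos_right _ hDK
  have hR2 : 2 * R ≤ R ^ 2 := by nlinarith
  obtain ⟨m, hm⟩ := hpn
  obtain ⟨m', hm'⟩ := hqn
  have hpm : ¬ p ∣ m := by
    rintro ⟨c, rfl⟩
    exact hs p (by omega) ⟨c, by rw [hm]; ring⟩
  have hqm : ¬ q ∣ m' := by
    rintro ⟨c, rfl⟩
    exact hs' q (by omega) ⟨c, by rw [hm']; ring⟩
  by_cases hpq : p * q ≤ Y * R
  · left
    have hdvd : p - 1 ∣ (n + 2).totient := by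
      rw [← hphi, hm, Nat.totient_mul ((Nat.Prime.coprime_iff_not_dvd hp).2 hpm),
        Nat.totient_prime hp]
      exact Dvd.intro _ rfl
    obtain ⟨q', hq', hg⟩ := exists_gcd_large (n + 2) R K D (p - 1) (by omega) hs' hK' hD hdvd
      (by omega)
    refine ⟨p, q', hp, Nat.prime_of_mem_primeFactors hq', ?_, ⟨m, hm⟩,
      Nat.dvd_of_mem_primeFactors hq', hg, le_trans (Nat.mul_le_mul_left _ (hqmax q' hq')) hpq⟩
    rintro rfl
    have h1 := Nat.dvd_of_mem_primeFactors hq'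
    have h2 : p ∣ 2 := (Nat.dvd_add_right ⟨m, hm⟩).1 h1
    have := Nat.le_of_dvd (by omega) h2
    omega
  · right
    refine ⟨m, m', p, q, hp, hq, by omega, by omega, by rw [hm, mul_comm], by rw [hm', mul_comm],
      hpm, hqm, ?_⟩
    rw [Nat.le_div_iff_mul_le (by omega)]
    push Not at hpq
    by_contra! hcon
    have h1 : n * (n + 2) ≤ Y * Y := Nat.mul_le_mul (by omega) hnY
    have h2 : n * (n + 2) = (p * q) * (m * m') := by
      conv_lhs => rw [hm', hm]
      ring
    have h3 : Y * (m * m' * R) ≤ (p * q) * (m * m') := by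
      calc Y * (m * m' * R) = (Y * R) * (m * m') := by ring
        _ ≤ _ := Nat.mul_le_mul_right _ hpq.le
    have h4 : Y * Y < Y * (m * m' * R) := Nat.mul_lt_mul_of_pos_left hcon (by omega)
    omega

open Classical in
theorem shift_card (Y : ℕ) (P : ℕ → Prop) :
    ((Finset.Icc 1 Y).filter fun n => n + 2 ≤ Y ∧ P (n + 2)).card ≤
      ((Finset.Icc 1 Y).filter P).card := by
  apply Finset.card_le_card_of_injOn (fun n => n + 2)
  · intro n hn
    simp only [Finset.coe_filter, Finset.mem_Icc, Set.mem_ofPred_eq] at hn ⊢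
    exact ⟨⟨by omega, hn.2.1⟩, hn.2.2⟩
  · intro a _ b _ h
    simpa using h

open Classical in
theorem main_count (Y R K D M : ℕ) (hR : 2 ≤ R) (hD : 1 ≤ D) (hM : 1 ≤ M)
    (hB : R ^ 3 * (R ^ 2 * D ^ K + 1) ^ K ≤ Y) :
    (((Finset.Icc 1 Y).filter fun n => n + 2 ≤ Y ∧ Even n ∧ (n + 1).Prime ∧
      n.totient = (n + 2).totient).card : ℝ) ≤
    Y / R + 2 * (Y * (2 / R)) + 2 * (Y * HH Y ^ M / (M : ℝ) ^ (K + 1)) + Y / R * HH Y +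
      2 * (Y * R) * (2 / D) * HH (Y * R) ^ 2 := by
  set A := (Finset.Icc 1 Y).filter fun n => n + 2 ≤ Y ∧ Even n ∧ (n + 1).Prime ∧
      n.totient = (n + 2).totient with hA
  set B0 := Finset.Icc 1 (Y / R) with hB0
  set P1 : ℕ → Prop := fun n => ∃ r, R ≤ r ∧ r ^ 2 ∣ n with hP1
  set P2 : ℕ → Prop := fun n => K < n.primeFactors.card with hP2
  set B1 := (Finset.Icc 1 Y).filter P1 with hB1
  set B1' := (Finset.Icc 1 Y).filter fun n => n + 2 ≤ Y ∧ P1 (n + 2) with hB1'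
  set B2 := (Finset.Icc 1 Y).filter P2 with hB2
  set B2' := (Finset.Icc 1 Y).filter fun n => n + 2 ≤ Y ∧ P2 (n + 2) with hB2'
  set B3 := (Finset.Icc 1 Y).filter fun n => Even n ∧ (n + 1).Prime ∧
    n.totient = (n + 2).totient ∧ ∃ m m' p q, IsGood (Y / R) n m m' p q with hB3
  set B4 := (Finset.Icc 1 Y).filter fun n => ∃ p q : ℕ, p.Prime ∧ q.Prime ∧ p ≠ q ∧ p ∣ n ∧
    q ∣ n + 2 ∧ D ≤ Nat.gcd (p - 1) (q - 1) ∧ p * q ≤ Y * R with hB4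
  have hsub : A ⊆ B0 ∪ (B1 ∪ (B1' ∪ (B2 ∪ (B2' ∪ (B3 ∪ B4))))) := by
    intro n hn
    simp only [hA, Finset.mem_filter, Finset.mem_Icc] at hn
    obtain ⟨⟨hn1, hnY⟩, hn2, hev, hpr, hphi⟩ := hn
    by_contra hcon
    simp only [Finset.mem_union, not_or, hB0, hB1, hB1', hB2, hB2', hB3, hB4, Finset.mem_filter,
      Finset.mem_Icc, hn1, hnY, hn2, hev, hpr, hphi, true_and, and_self, hP1, hP2, not_lt] at hcon
    obtain ⟨c0, c1, c1', c2, c2', c3, c4⟩ := hcon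
    have := main_subset Y R K D hR hD hB n hn1 hn2 hev hphi
      (by
        by_contra! h
        exact c0 ((Nat.le_div_iff_mul_le (by omega)).2 h))
      (fun r hr hd => c1 ⟨r, hr, hd⟩) (fun r hr hd => c1' ⟨r, hr, hd⟩) c2 c2'
    rcases this with h | h
    · exact c4 h
    · exact c3 h
  have hcard : A.card ≤ B0.card + (B1.card + (B1'.card + (B2.card + (B2'.card +
      (B3.card + B4.card))))) := by
    refine (Finset.card_le_card hsub).trans ?_
    iterate 5 refine (Finset.card_union_le _ _).trans (Nat.add_le_add_left ?_ _)
    exact Finset.card_union_le _ _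
  have hMp : (0 : ℝ) < (M : ℝ) ^ (K + 1) := by
    have : (0 : ℝ) < M := by exact_mod_cast hM
    positivity
  have hRp : (0 : ℝ) < R := by exact_mod_cast (by omega : 0 < R)
  have b0 : (B0.card : ℝ) ≤ Y / R := by
    rw [hB0, Nat.card_Icc, Nat.add_sub_cancel]; exact Nat.cast_div_le
  have b1 : (B1.card : ℝ) ≤ Y * (2 / R) := sq_count Y R (by omega)
  have b1' : (B1'.card : ℝ) ≤ B1.card := by exact_mod_cast shift_card Y P1
  have b2 : (B2.card : ℝ) ≤ Y * HH Y ^ M / (M : ℝ) ^ (K + 1) := by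
    rw [le_div_iff₀ hMp]
    convert omega_count Y M K hM
  have b2' : (B2'.card : ℝ) ≤ B2.card := by
    have := shift_card Y P2
    rw [Nat.cast_le]
    convert this
  have b3 : (B3.card : ℝ) ≤ Y / R * HH Y := by
    refine (good_count Y (Y / R)).trans ?_
    have h1 : ((Y / R : ℕ) : ℝ) ≤ Y / R := Nat.cast_div_le
    have h2 := HH_mono (Nat.div_le_self Y R)
    have h3 := HH_nonneg (Y / R)
    gcongr
  have b4 : (B4.card : ℝ) ≤ 2 * (Y * R) * (2 / D) * HH (Y * R) ^ 2 := by
    have := pair_count Y (Y * R) D hD (Nat.le_mul_of_pos_right _ (by omega))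
    push_cast at this
    exact this
  have hcard' : (A.card : ℝ) ≤ B0.card + (B1.card + (B1'.card + (B2.card + (B2'.card +
      (B3.card + B4.card))))) := by exact_mod_cast hcard
  linarith

theorem analytic (M : ℕ) (hM : Real.exp 8 ≤ M) (ℓ x : ℝ) (hℓ : 10 ≤ ℓ) (hx : x = Real.exp (ℓ ^ 3))
    (Y R K D : ℕ) (hY : Y = ⌊x⌋₊ + 1) (hR : R = ⌈Real.exp (2 * ℓ)⌉₊) (hK : K = ⌊ℓ / 4⌋₊)
    (hD : D = R ^ 2) (hbig : 24 * (2 * ℓ ^ 3) ^ M < Real.exp ℓ) :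
    2 ≤ R ∧ 1 ≤ D ∧ 1 ≤ M ∧ R ^ 3 * (R ^ 2 * D ^ K + 1) ^ K ≤ Y ∧
    Y / R + 2 * (Y * (2 / R)) + 2 * (Y * HH Y ^ M / (M : ℝ) ^ (K + 1)) + Y / R * HH Y +
      2 * (Y * R) * (2 / D) * HH (Y * R) ^ 2 < x / Real.exp ℓ := by
  have hRlow : Real.exp (2 * ℓ) ≤ R := hR ▸ Nat.le_ceil _
  have hRhigh : (R : ℝ) < Real.exp (2 * ℓ) + 1 := hR ▸ Nat.ceil_lt_add_one (by positivity)
  have hexp20 : 2 * ℓ + 1 ≤ Real.exp (2 * ℓ) := Real.add_one_le_exp _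
  have hexpl : ℓ + 1 ≤ Real.exp ℓ := Real.add_one_le_exp _
  have hR2 : 2 ≤ R := by
    have : (2 : ℝ) ≤ R := by linarith
    exact_mod_cast this
  have hRup : (R : ℝ) ≤ Real.exp (3 * ℓ) := by
    have : Real.exp (3 * ℓ) = Real.exp (2 * ℓ) * Real.exp ℓ := by rw [← Real.exp_add]; ring_nf
    rw [this]; nlinarith
  have hR0 : (0 : ℝ) < R := by linarith
  have hM1' : (1 : ℝ) ≤ M := le_trans (by have := Real.add_one_le_exp (8 : ℝ); linarith) hM
  have hM1 : 1 ≤ M := by exact_mod_cast hM1'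
  have hM2' : (2 : ℝ) ≤ M := le_trans (by have := Real.add_one_le_exp (8 : ℝ); linarith) hM
  have hM2 : 2 ≤ M := by exact_mod_cast hM2'
  have hx0 : 0 < x := hx ▸ Real.exp_pos _
  have hx1 : 1 ≤ x := by
    rw [hx]; exact Real.one_le_exp (by positivity)
  have hYlow : x ≤ Y := by
    rw [hY]; push_cast; exact (Nat.lt_floor_add_one x).le
  have hYup : (Y : ℝ) ≤ 2 * x := by
    rw [hY]; push_cast
    have := Nat.floor_le hx0.le
    linarith
  have hY1 : 1 ≤ Y := by omega
  have hY0 : (0 : ℝ) < Y := by linarith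
  have hKup : (K : ℝ) ≤ ℓ / 4 := hK ▸ Nat.floor_le (by positivity)
  have hKlow : ℓ / 4 < (K : ℝ) + 1 := hK ▸ Nat.lt_floor_add_one _
  have hD1 : 1 ≤ D := by rw [hD]; exact Nat.one_le_pow _ _ (by omega)
  refine ⟨hR2, hD1, hM1, ?_, ?_⟩
  · have h1 : R ^ 3 * (R ^ 2 * D ^ K + 1) ^ K ≤ R ^ (3 + (2 * K + 3) * K) := by
      rw [pow_add, pow_mul R (2 * K + 3) K]
      gcongr
      have e : R ^ 2 * D ^ K = R ^ (2 * K + 2) := by rw [hD, ← pow_mul, ← pow_add]; ring_nf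
      have : 1 ≤ R ^ (2 * K + 2) := Nat.one_le_pow _ _ (by omega)
      rw [e, pow_succ R (2 * K + 2)]
      nlinarith
    have h2 : ((R ^ (3 + (2 * K + 3) * K) : ℕ) : ℝ) ≤ Y := by
      push_cast
      calc (R : ℝ) ^ (3 + (2 * K + 3) * K) ≤ Real.exp (3 * ℓ) ^ (3 + (2 * K + 3) * K) := by gcongr
        _ = Real.exp ((3 + (2 * K + 3) * K : ℕ) * (3 * ℓ)) := by rw [Real.exp_nat_mul]
        _ ≤ Real.exp (ℓ ^ 3) := by
          apply Real.exp_le_exp.2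
          push_cast
          have hK0 : (0 : ℝ) ≤ K := by positivity
          have : (3 + (2 * (K : ℝ) + 3) * K) ≤ 3 + (2 * (ℓ / 4) + 3) * (ℓ / 4) := by gcongr
          have h3 : (3 + (2 * (K : ℝ) + 3) * K) * (3 * ℓ) ≤
              (3 + (2 * (ℓ / 4) + 3) * (ℓ / 4)) * (3 * ℓ) := by gcongr
          have h4 : 0 ≤ ℓ * ((ℓ - 10) * ℓ) := by
            have : 0 ≤ ℓ - 10 := by linarith
            positivity
          nlinarith
        _ = x := hx.symm
        _ ≤ Y := hYlow
    have h2' : R ^ (3 + (2 * K + 3) * K) ≤ Y := by exact_mod_cast h2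
    exact h1.trans h2'
  · set h := 2 * ℓ ^ 3 with hh
    have hl3 : 1000 ≤ ℓ ^ 3 := by
      calc (1000 : ℝ) = 10 ^ 3 := by norm_num
        _ ≤ ℓ ^ 3 := by gcongr
    have hh1 : 1 ≤ h := by linarith
    have hYR : HH (Y * R) ≤ h := by
      refine (HH_le _).trans ?_
      have : Real.log ((Y * R : ℕ) : ℝ) ≤ 1 + ℓ ^ 3 + 3 * ℓ := by
        rw [Real.log_le_iff_le_exp (by push_cast; positivity)]
        push_cast
        rw [Real.exp_add, Real.exp_add, ← hx]
        have e2 : 2 ≤ Real.exp 1 := by have := Real.add_one_le_exp (1 : ℝ); linarith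
        calc (Y : ℝ) * R ≤ (2 * x) * Real.exp (3 * ℓ) := by gcongr
          _ ≤ _ := by gcongr
      have : 100 * ℓ ≤ ℓ ^ 3 := by
        have : (10 : ℝ) ^ 2 ≤ ℓ ^ 2 := by gcongr
        nlinarith
      linarith
    have hYh : HH Y ≤ h := (HH_mono (Nat.le_mul_of_pos_right _ (by omega))).trans hYR
    have hHY0 := HH_nonneg Y
    have hHYR0 := HH_nonneg (Y * R)
    set E := Real.exp (2 * ℓ) with hE
    have hE0 : 0 < E := Real.exp_pos _
    have hMK : E ≤ (M : ℝ) ^ (K + 1) := by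
      calc E ≤ Real.exp ((K + 1 : ℕ) * 8) := by
            apply Real.exp_le_exp.2; push_cast; linarith
        _ = Real.exp 8 ^ (K + 1) := Real.exp_nat_mul _ _
        _ ≤ _ := by gcongr
    have hhM1 : 1 ≤ h ^ M := one_le_pow₀ hh1
    have hhM : h ≤ h ^ M := le_self_pow₀ hh1 (by omega)
    have hhM2 : h ^ 2 ≤ h ^ M := pow_le_pow_right₀ hh1 hM2
    have hYRE : (Y : ℝ) / R ≤ Y / E := by gcongr
    have t0 : (0 : ℝ) ≤ Y / R := by positivity
    have t1 : 2 * ((Y : ℝ) * (2 / R)) = 4 * (Y / R) := by ring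
    have t2 : (Y : ℝ) * HH Y ^ M / (M : ℝ) ^ (K + 1) ≤ Y / E * h ^ M := by
      calc (Y : ℝ) * HH Y ^ M / (M : ℝ) ^ (K + 1) ≤ Y * h ^ M / E := by gcongr
        _ = _ := by ring
    have t3 : (Y : ℝ) / R * HH Y ≤ Y / E * h ^ M := by
      have := hYh.trans hhM
      gcongr
    have t4 : 2 * ((Y : ℝ) * R) * (2 / D) * HH (Y * R) ^ 2 ≤ 4 * (Y / E * h ^ M) := by
      have e : 2 * ((Y : ℝ) * R) * (2 / D) = 4 * (Y / R) := by
        rw [hD]; push_cast; field_simp; ring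
      rw [e, mul_assoc]
      have : HH (Y * R) ^ 2 ≤ h ^ M := le_trans (by gcongr) hhM2
      gcongr
    have t5 : (Y : ℝ) / R ≤ Y / E * h ^ M := by
      calc (Y : ℝ) / R ≤ Y / E := hYRE
        _ = Y / E * 1 := by ring
        _ ≤ _ := by gcongr
    have tot : (Y : ℝ) / R + 2 * (Y * (2 / R)) + 2 * (Y * HH Y ^ M / (M : ℝ) ^ (K + 1)) +
        Y / R * HH Y + 2 * (Y * R) * (2 / D) * HH (Y * R) ^ 2 ≤ 12 * (Y / E * h ^ M) := by
      linarith
    refine lt_of_le_of_lt tot ?_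
    have hEE : E = Real.exp ℓ * Real.exp ℓ := by rw [hE, ← Real.exp_add]; ring_nf
    calc 12 * (Y / E * h ^ M) ≤ 12 * ((2 * x) / E * h ^ M) := by gcongr
      _ = x / E * (24 * h ^ M) := by ring
      _ < x / E * Real.exp ℓ := by gcongr
      _ = x / Real.exp ℓ := by rw [hEE]; field_simp

theorem phi_equal_count_ell_one : ∀ᶠ x : ℝ in atTop,
    ({p : ℕ | p.Prime ∧ Odd p ∧ (p : ℝ) ≤ x ∧
        Nat.totient (p - 1) = Nat.totient (p + 1)}.ncard : ℝ) <
      x / Real.exp ((Real.log x) ^ ((1 : ℝ) / 3)) + 2 := by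
  classical
  obtain ⟨M, hM⟩ := exists_nat_ge (Real.exp 8)
  have ht : Tendsto (fun x : ℝ => (Real.log x) ^ ((1 : ℝ) / 3)) atTop atTop :=
    (tendsto_rpow_atTop (by norm_num)).comp Real.tendsto_log_atTop
  have hev : ∀ᶠ ℓ : ℝ in atTop, 24 * (2 * ℓ ^ 3) ^ M < Real.exp ℓ := by
    have h1 := Real.tendsto_exp_div_pow_atTop (3 * M)
    filter_upwards [h1.eventually_gt_atTop (24 * 2 ^ M), eventually_gt_atTop 0] with ℓ h hℓ
    rw [lt_div_iff₀ (by positivity)] at h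
    calc 24 * (2 * ℓ ^ 3) ^ M = 24 * 2 ^ M * ℓ ^ (3 * M) := by rw [mul_pow, ← pow_mul]; ring
      _ < _ := h
  filter_upwards [ht.eventually hev, ht.eventually (eventually_ge_atTop 10),
    eventually_gt_atTop 1] with x hbig hl hx1
  set ℓ := (Real.log x) ^ ((1 : ℝ) / 3) with hℓ
  have hx : x = Real.exp (ℓ ^ 3) := by
    have h0 : 0 ≤ Real.log x := Real.log_nonneg hx1.le
    have : ℓ ^ 3 = Real.log x := by
      rw [hℓ, ← Real.rpow_natCast, ← Real.rpow_mul h0]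
      norm_num
    rw [this, Real.exp_log (by linarith)]
  obtain ⟨a1, a2, a3, a4, a5⟩ := analytic M hM ℓ x hl hx _ _ _ _ rfl rfl rfl rfl hbig
  have hmain := main_count _ _ _ _ M a1 a2 a3 a4
  have hcard : {p : ℕ | p.Prime ∧ Odd p ∧ (p : ℝ) ≤ x ∧
      Nat.totient (p - 1) = Nat.totient (p + 1)}.ncard ≤
      ((Finset.Icc 1 (⌊x⌋₊ + 1)).filter fun n => n + 2 ≤ ⌊x⌋₊ + 1 ∧ Even n ∧ (n + 1).Prime ∧
        n.totient = (n + 2).totient).card := by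
    rw [← Set.ncard_coe_finset]
    apply Set.ncard_le_ncard_of_injOn (fun p => p - 1)
    · rintro p ⟨hp, hodd, hpx, hphi⟩
      have h2 := hp.two_le
      have hfl : p ≤ ⌊x⌋₊ := Nat.le_floor hpx
      obtain ⟨k, hk⟩ := hodd
      have e1 : p - 1 + 1 = p := by omega
      have e2 : p - 1 + 2 = p + 1 := by omega
      simp only [Finset.coe_filter, Finset.mem_Icc, Set.mem_ofPred_eq, e1, e2]
      exact ⟨⟨by omega, by omega⟩, by omega, ⟨k, by omega⟩, hp, hphi⟩
    · rintro p ⟨hp, -⟩ q ⟨hq, -⟩ h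
      have := hp.two_le
      have := hq.two_le
      simp only at h
      omega
  have hcard' : ({p : ℕ | p.Prime ∧ Odd p ∧ (p : ℝ) ≤ x ∧
      Nat.totient (p - 1) = Nat.totient (p + 1)}.ncard : ℝ) ≤
      (((Finset.Icc 1 (⌊x⌋₊ + 1)).filter fun n => n + 2 ≤ ⌊x⌋₊ + 1 ∧ Even n ∧ (n + 1).Prime ∧
        n.totient = (n + 2).totient).card : ℝ) := by exact_mod_cast hcard
  refine lt_of_le_of_lt (hcard'.trans (le_trans (le_of_eq ?_) hmain)) ?_
  · congr!
  · linarith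
end

section
/- If t is a positive integer such that t+1, 2t+1, and 4t+3 are all prime, then t = 1 or t = 2 (yielding the prime triples (2,3,7) and (3,5,11)). -/
theorem prime_triple_classification (t : ℕ) (ht : 0 < t)
    (h1 : Nat.Prime (t + 1)) (h2 : Nat.Prime (2 * t + 1))
    (h3 : Nat.Prime (4 * t + 3)) : t = 1 ∨ t = 2 := by
  have key : ∀ p : ℕ, Nat.Prime p → p % 3 = 0 → p = 3 := fun p hp h =>
    ((Nat.prime_dvd_prime_iff_eq Nat.prime_three hp).mp (Nat.dvd_of_mod_eq_zero h)).symm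
  have k1 := key _ h1
  have k2 := key _ h2
  have k3 := key _ h3
  have hm : t % 3 = 0 ∨ t % 3 = 1 ∨ t % 3 = 2 := by omega
  rcases hm with h | h | h
  · have := k3 (by omega)
    omega
  · have := k2 (by omega)
    omega
  · have := k1 (by omega)
    omega
end

section
/- Let j, k, t be positive integers such that j and j+k have exactly the same set of prime divisors, and set g = gcd(j, j+k). Suppose q₁ = jt/g + 1 and q₂ = (j+k)t/g + 1 are prime numbers, neither of which divides j. Then the integer n = j · ((j+k)t/g + 1) satisfies φ(n) = φ(n+k). -/
theorem graham_holt_pomerance_construction (j k t : ℕ) (hj : 0 < j) (hk : 0 < k)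
    (ht : 0 < t)
    (hsame : ∀ q : ℕ, q.Prime → (q ∣ j ↔ q ∣ (j + k)))
    (hq₁ : Nat.Prime (j * t / Nat.gcd j (j + k) + 1))
    (hq₂ : Nat.Prime ((j + k) * t / Nat.gcd j (j + k) + 1))
    (hq₁j : ¬ (j * t / Nat.gcd j (j + k) + 1) ∣ j)
    (hq₂j : ¬ ((j + k) * t / Nat.gcd j (j + k) + 1) ∣ j) :
    Nat.totient (j * ((j + k) * t / Nat.gcd j (j + k) + 1)) =
      Nat.totient (j * ((j + k) * t / Nat.gcd j (j + k) + 1) + k) := by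
  have hg : 0 < Nat.gcd j (j + k) := Nat.gcd_pos_of_pos_left _ hj
  have h1 : Nat.gcd j (j + k) * (j * t / Nat.gcd j (j + k)) = j * t :=
    Nat.mul_div_cancel' ((Nat.gcd_dvd_left _ _).mul_right t)
  have h2 : Nat.gcd j (j + k) * ((j + k) * t / Nat.gcd j (j + k)) = (j + k) * t :=
    Nat.mul_div_cancel' ((Nat.gcd_dvd_right _ _).mul_right t)
  have hpf : j.primeFactors = (j + k).primeFactors := by
    ext p
    simp only [Nat.mem_primeFactors]
    constructor
    · rintro ⟨hp, hd, _⟩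
      exact ⟨hp, (hsame p hp).1 hd, by omega⟩
    · rintro ⟨hp, hd, _⟩
      exact ⟨hp, (hsame p hp).2 hd, by omega⟩
  have e1 := Nat.totient_mul_prod_primeFactors j
  have e2 := Nat.totient_mul_prod_primeFactors (j + k)
  rw [← hpf] at e2
  have hP : 0 < ∏ p ∈ j.primeFactors, p :=
    Finset.prod_pos fun p hp => Nat.pos_of_mem_primeFactors hp
  have hq₁jk := fun h => hq₁j ((hsame _ hq₁).2 h)
  generalize Nat.gcd j (j + k) = g at *
  generalize j * t / g = a at *
  generalize (j + k) * t / g = b at *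
  generalize (∏ p ∈ j.primeFactors, p) = P at *
  generalize (∏ p ∈ j.primeFactors, (p - 1)) = Q at *
  have hab : j * b = (j + k) * a := by
    apply Nat.eq_of_mul_eq_mul_left hg
    calc g * (j * b) = j * (g * b) := by ring
      _ = (j + k) * (g * a) := by rw [h1, h2]; ring
      _ = _ := by ring
  have hn : j * (b + 1) + k = (j + k) * (a + 1) := by
    rw [mul_add, hab]; ring
  rw [hn, Nat.totient_mul ((hq₂.coprime_iff_not_dvd.2 hq₂j).symm),
    Nat.totient_mul ((hq₁.coprime_iff_not_dvd.2 hq₁jk).symm),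
    Nat.totient_prime hq₁, Nat.totient_prime hq₂, Nat.add_sub_cancel, Nat.add_sub_cancel]
  apply Nat.eq_of_mul_eq_mul_right hP
  calc j.totient * b * P = (j.totient * P) * b := by ring
    _ = (j * b) * Q := by rw [e1]; ring
    _ = ((j + k) * Q) * a := by rw [hab]; ring
    _ = _ := by rw [← e2]; ring
end
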